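/- Let 0<r<1, α>0 and β∈ℝ. Then for every integer n ≥ n₀(α,r,1) one has E_n(C^{α,r}_{β,1})_C = e^{-α n^r} n^{1-r} [ 1/(π α r) + γ_n · ( (αr)^{-2} n^{-r} + n^{-(1-r)} ) ], where the quantity γ_n = γ_n(α,r,β) satisfies |γ_n| ≤ (14π)². -/

import Mathlib

open MeasureTheory Real Filter
open scoped ENNReal

/-- The generalized Poisson kernel `P_{α,r,β}(t) = Σ_{k=1}^∞ e^{-α k^r} cos(kt − βπ/2)`. -/
noncomputable def genPoissonKernel (α r β : ℝ) (t : ℝ) : ℝ :=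
  ∑' k : ℕ, Real.exp (-α * ((k : ℝ) + 1) ^ r) * Real.cos (((k : ℝ) + 1) * t - β * π / 2)

/-- Fourier cosine coefficient `a_k = (1/π)∫_{-π}^{π} f(t) cos(kt) dt`. -/
noncomputable def fourierCoefA (f : ℝ → ℝ) (k : ℕ) : ℝ :=
  (1 / π) * ∫ t in (-π)..π, f t * Real.cos (k * t)

/-- Fourier sine coefficient `b_k = (1/π)∫_{-π}^{π} f(t) sin(kt) dt`. -/
noncomputable def fourierCoefB (f : ℝ → ℝ) (k : ℕ) : ℝ :=
  (1 / π) * ∫ t in (-π)..π, f t * Real.sin (k * t)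

/-- Partial Fourier sum of order `m` of `f`. -/
noncomputable def fourierSum (m : ℕ) (f : ℝ → ℝ) (x : ℝ) : ℝ :=
  fourierCoefA f 0 / 2 +
    ∑ k ∈ Finset.Icc 1 m, (fourierCoefA f k * Real.cos (k * x) + fourierCoefB f k * Real.sin (k * x))

/-- The class `C^{α,r}_{β,p}` of generalized Poisson integrals. -/
def poissonClass (α r β : ℝ) (p : ℝ≥0∞) : Set (ℝ → ℝ) :=
  {f | (∀ x, f (x + 2 * π) = f x) ∧ ∃ a₀ : ℝ, ∃ φ : ℝ → ℝ,
    (∀ x, φ (x + 2 * π) = φ x) ∧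
    eLpNorm φ p (volume.restrict (Set.Ioc (0 : ℝ) (2 * π))) ≤ 1 ∧
    (∫ t in (0 : ℝ)..(2 * π), φ t) = 0 ∧
    ∀ x, f x = a₀ / 2 + (1 / π) * ∫ t in (-π)..π, genPoissonKernel α r β (x - t) * φ t}

/-- `E_n(C^{α,r}_{β,p})_C`: uniform deviation of Fourier sums of order `n-1` on the class. -/
noncomputable def EnC (α r β : ℝ) (p : ℝ≥0∞) (n : ℕ) : ℝ :=
  ⨆ f ∈ poissonClass α r β p, ⨆ x : ℝ, |f x - fourierSum (n - 1) f x|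

/-- `n₀(α,r,1)`: the smallest positive integer `n` with
`(1/(αr)) n^{-r} + αr n^{-(1-r)} ≤ 1/14`. -/
noncomputable def n₀one (α r : ℝ) : ℕ :=
  sInf {n : ℕ | 0 < n ∧
    1 / (α * r) * (n : ℝ) ^ (-r) + α * r * (n : ℝ) ^ (-(1 - r)) ≤ 1 / 14}

/-!
Write `a_k = e^{-α k^r}` and `θ = βπ/2`. If `f` has density `φ`, then `f - S_{n-1}(f)` is the
convolution of `φ / π` with the tail `T(t) = ∑_{k ≥ n} a_k cos (k t - θ)`. As `φ` ranges over the
mean-zero functions of `L_1`-norm at most `1`, the supremum of the deviation is at most `S / π` with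
`S = ∑_{k ≥ n} a_k`, and, letting `φ` tend to half the difference of two Dirac masses, at least
`(T(u) - T(v)) / (2π)` for all `u`, `v`. Choosing `|u|, |v| ≤ π / n` with `n u ≡ θ` and
`n v ≡ θ + π` modulo `2π` puts the terms of both tails almost in phase, whence a lower bound
`(S - (π / n) M) / π` with `M = ∑ j a_{n+j}`. Finally `a_k` decays on the scale
`q = n^{1-r} / (α r)`, and telescoping gives `S ≈ a_n q` and `M = O(a_n q²)`.

Non-measurable densities `φ` contribute only constants `f`, because the kernel vanishes at most on a
null set. Indeed `k ↦ a_k` is a Hausdorff moment sequence (as `x ↦ x^r` is a Bernstein function), so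
`∑ a_k z^k = ∫ dμ(x) / (1 - z x)` continues analytically across the unit circle away from `z = 1`
and the kernel is real analytic on `(0, 2π)`.
-/

open Set Topology

/-! ### Tails of the stretched exponential -/

theorem tsum_le_of_le_sub_succ {b T : ℕ → ℝ} (hb : ∀ j, 0 ≤ b j) (hT : ∀ j, 0 ≤ T j)
    (h : ∀ j, b j ≤ T j - T (j + 1)) : ∑' j, b j ≤ T 0 := by
  refine Real.tsum_le_of_sum_range_le hb fun N => ?_
  calc ∑ j ∈ Finset.range N, b j
      ≤ ∑ j ∈ Finset.range N, (T j - T (j + 1)) := Finset.sum_le_sum fun j _ => h j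
    _ = T 0 - T N := Finset.sum_range_sub' T N
    _ ≤ T 0 := sub_le_self _ (hT N)

theorem le_tsum_of_sub_succ_le {b T : ℕ → ℝ} (hb : Summable b) (hT : Tendsto T atTop (𝓝 0))
    (h : ∀ j, T j - T (j + 1) ≤ b j) : T 0 ≤ ∑' j, b j := by
  have hlim : Tendsto (fun N => T 0 - T N) atTop (𝓝 (T 0)) := by
    simpa only [sub_zero] using hT.const_sub (T 0)
  refine le_of_tendsto_of_tendsto' hlim hb.hasSum.tendsto_sum_nat fun N => ?_
  rw [← Finset.sum_range_sub' T N]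
  exact Finset.sum_le_sum fun j _ => h j

theorem exists_sub_add_one_eq_neg_deriv {f f' : ℝ → ℝ} {x : ℝ}
    (hf : ∀ y ∈ Icc x (x + 1), HasDerivAt f (f' y) y) :
    ∃ y ∈ Ioo x (x + 1), f x - f (x + 1) = -f' y := by
  obtain ⟨y, hy, hslope⟩ := exists_hasDerivAt_eq_slope f f' (lt_add_one x)
    (fun z hz => (hf z hz).continuousAt.continuousWithinAt)
    fun z hz => hf z (Ioo_subset_Icc_self hz)
  exact ⟨y, hy, by rw [hslope, add_sub_cancel_left, div_one, neg_sub]⟩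

/-- The stretched exponential `e^{-α x^r}`, whose values at the positive integers are the
coefficients of the generalized Poisson kernel. -/
noncomputable def stretchedExp (α r x : ℝ) : ℝ := exp (-α * x ^ r)

/-- The length `-E / E' = x^{1-r} / (α r)` over which the stretched exponential `E` decays by a
constant factor near `x`; the tail sum of `E` from `x` on is asymptotic to `E x` times it. -/
noncomputable def decayScale (α r x : ℝ) : ℝ := x ^ (1 - r) / (α * r)

theorem stretchedExp_pos (α r x : ℝ) : 0 < stretchedExp α r x := exp_pos _

section StretchedExp

variable {α r x : ℝ}

theorem stretchedExp_le_of_le {y : ℝ} (hα : 0 ≤ α) (hr : 0 ≤ r) (hx : 0 ≤ x) (hxy : x ≤ y) :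
    stretchedExp α r y ≤ stretchedExp α r x := by
  have hpow : x ^ r ≤ y ^ r := rpow_le_rpow hx hxy hr
  exact exp_le_exp.2 (by nlinarith)

theorem decayScale_pos (hα : 0 < α) (hr : 0 < r) (hx : 0 < x) : 0 < decayScale α r x := by
  unfold decayScale; positivity

theorem decayScale_div_self (hx : 0 < x) : decayScale α r x / x = 1 / (α * r) * x ^ (-r) := by
  rw [decayScale, sub_eq_add_neg, rpow_add hx, rpow_one]
  field_simp

theorem one_div_decayScale (hx : 0 ≤ x) : 1 / decayScale α r x = α * r * x ^ (-(1 - r)) := by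
  rw [decayScale, rpow_neg hx, one_div_div, div_eq_mul_inv]

theorem decayScale_div_self_le_of_le {y : ℝ} (hα : 0 < α) (hr : 0 < r) (hx : 0 < x)
    (hxy : x ≤ y) : decayScale α r y / y ≤ decayScale α r x / x := by
  rw [decayScale_div_self hx, decayScale_div_self (hx.trans_le hxy)]
  have : y ^ (-r) ≤ x ^ (-r) := rpow_le_rpow_of_nonpos hx hxy (neg_nonpos.2 hr.le)
  gcongr

theorem hasDerivAt_stretchedExp (hx : 0 < x) :
    HasDerivAt (stretchedExp α r) (-(stretchedExp α r x / decayScale α r x)) x := by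
  have hderiv := ((hasDerivAt_rpow_const (p := r) (.inl hx.ne')).const_mul (-α)).exp
  refine hderiv.congr_deriv ?_
  rw [← one_div_mul_eq_div, one_div_decayScale hx.le, neg_sub, stretchedExp]
  ring

theorem hasDerivAt_decayScale (hx : 0 < x) :
    HasDerivAt (decayScale α r) ((1 - r) * (decayScale α r x / x)) x := by
  refine ((hasDerivAt_rpow_const (p := 1 - r) (.inl hx.ne')).div_const (α * r)).congr_deriv ?_
  rw [rpow_sub_one hx.ne', decayScale]
  ring

theorem hasDerivAt_stretchedExp_mul_decayScale (hα : 0 < α) (hr : 0 < r) (hx : 0 < x) :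
    HasDerivAt (fun y => stretchedExp α r y * decayScale α r y)
      (-(stretchedExp α r x * (1 - (1 - r) * (decayScale α r x / x)))) x := by
  have hq := (decayScale_pos hα hr hx).ne'
  refine ((hasDerivAt_stretchedExp hx).mul (hasDerivAt_decayScale hx)).congr_deriv ?_
  field_simp
  ring

theorem hasDerivAt_stretchedExp_mul_decayScale_sq (hα : 0 < α) (hr : 0 < r) (hx : 0 < x) :
    HasDerivAt (fun y => stretchedExp α r y * decayScale α r y ^ 2)
      (-(stretchedExp α r x * decayScale α r x *
        (1 - 2 * ((1 - r) * (decayScale α r x / x))))) x := by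
  have hq := (decayScale_pos hα hr hx).ne'
  refine ((hasDerivAt_stretchedExp hx).mul
    ((hasDerivAt_decayScale hx).pow 2)).congr_deriv ?_
  rw [Pi.pow_apply]
  field_simp
  ring

theorem tendsto_rpow_mul_stretchedExp_atTop (hα : 0 < α) (hr : 0 < r) (p : ℝ) :
    Tendsto (fun x => x ^ p * stretchedExp α r x) atTop (𝓝 0) := by
  have hcomp := (tendsto_rpow_mul_exp_neg_mul_atTop_nhds_zero (p / r) α hα).comp
    (tendsto_rpow_atTop hr)
  refine hcomp.congr' ?_
  filter_upwards [eventually_ge_atTop 0] with x hx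
  rw [Function.comp_apply, ← rpow_mul hx, mul_div_cancel₀ p hr.ne', stretchedExp]

theorem tendsto_stretchedExp_mul_decayScale_atTop (hα : 0 < α) (hr : 0 < r) :
    Tendsto (fun x => stretchedExp α r x * decayScale α r x) atTop (𝓝 0) := by
  have h := (tendsto_rpow_mul_stretchedExp_atTop hα hr (1 - r)).div_const (α * r)
  rw [zero_div] at h
  exact h.congr fun x => by rw [decayScale]; ring

theorem summable_rpow_mul_stretchedExp (hα : 0 < α) (hr : 0 < r) (p : ℝ) :
    Summable fun k : ℕ => (k : ℝ) ^ p * stretchedExp α r k := by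
  have hbound : (fun x => x ^ p * stretchedExp α r x) =O[atTop] fun x => x ^ (-2 : ℝ) := by
    refine Asymptotics.IsBigO.of_bound 1 ?_
    have hlim := tendsto_rpow_mul_stretchedExp_atTop hα hr (p + 2)
    filter_upwards [hlim.eventually_le_const one_pos, eventually_gt_atTop 0] with x hle hx
    rw [rpow_add hx] at hle
    rw [one_mul, norm_of_nonneg (by have := stretchedExp_pos α r x; positivity),
      norm_of_nonneg (by positivity), rpow_neg hx.le, ← one_div, le_div_iff₀ (by positivity)]
    linarith
  exact summable_of_isBigO_nat (summable_nat_rpow.2 (by norm_num))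
    (hbound.comp_tendsto tendsto_natCast_atTop_atTop)

theorem summable_stretchedExp (hα : 0 < α) (hr : 0 < r) :
    Summable fun k : ℕ => stretchedExp α r k := by
  simpa only [rpow_zero, one_mul] using summable_rpow_mul_stretchedExp hα hr 0

theorem summable_stretchedExp_add (hα : 0 < α) (hr : 0 < r) (n : ℕ) :
    Summable fun j : ℕ => stretchedExp α r ((n : ℝ) + j) := by
  simpa only [Nat.cast_add, add_comm] using
    (summable_nat_add_iff n).2 (summable_stretchedExp hα hr)

theorem summable_mul_stretchedExp_add (hα : 0 < α) (hr : 0 < r) (n : ℕ) :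
    Summable fun j : ℕ => (j : ℝ) * stretchedExp α r ((n : ℝ) + j) := by
  have h := (summable_nat_add_iff n).2 (summable_rpow_mul_stretchedExp hα hr 1)
  refine Summable.of_nonneg_of_le (fun j => ?_) (fun j => ?_) h
  · have := stretchedExp_pos α r (n + j); positivity
  · have := stretchedExp_pos α r (n + j)
    rw [rpow_one, Nat.cast_add, add_comm (j : ℝ)]
    exact mul_le_mul_of_nonneg_right (by linarith [n.cast_nonneg (α := ℝ)]) this.le

theorem stretchedExp_mul_decayScale_sub_le (hα : 0 < α) (hr : 0 < r) (hr1 : r ≤ 1) (hx : 0 < x) :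
    stretchedExp α r x * decayScale α r x - stretchedExp α r (x + 1) * decayScale α r (x + 1) ≤
      stretchedExp α r x := by
  obtain ⟨y, hy, heq⟩ := exists_sub_add_one_eq_neg_deriv fun y (hy : y ∈ Icc x (x + 1)) =>
    hasDerivAt_stretchedExp_mul_decayScale hα hr (hx.trans_le hy.1)
  have hy0 : 0 < y := hx.trans hy.1
  have hslope : 0 ≤ (1 - r) * (decayScale α r y / y) :=
    mul_nonneg (by linarith) (div_pos (decayScale_pos hα hr hy0) hy0).le
  rw [heq, neg_neg]
  calc stretchedExp α r y * (1 - (1 - r) * (decayScale α r y / y))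
      ≤ stretchedExp α r y := mul_le_of_le_one_right (stretchedExp_pos α r y).le (by linarith)
    _ ≤ stretchedExp α r x := stretchedExp_le_of_le hα.le hr.le hx.le hy.1.le

theorem slope_decayScale_le {y : ℝ} (hα : 0 < α) (hr : 0 < r) (hx : 0 < x) (hxy : x ≤ y) :
    (1 - r) * (decayScale α r y / y) ≤ decayScale α r x / x := by
  have hle := decayScale_div_self_le_of_le hα hr hx hxy
  have hpos : 0 < decayScale α r y / y :=
    div_pos (decayScale_pos hα hr (hx.trans_le hxy)) (hx.trans_le hxy)
  nlinarith

theorem mul_stretchedExp_add_one_le_sub {y : ℝ} (hα : 0 < α) (hr : 0 < r) (hx : 0 < x)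
    (hxy : x ≤ y) (hscale : decayScale α r x / x ≤ 1) :
    (1 - decayScale α r x / x) * stretchedExp α r (y + 1) ≤
      stretchedExp α r y * decayScale α r y -
        stretchedExp α r (y + 1) * decayScale α r (y + 1) := by
  have hy0 : 0 < y := hx.trans_le hxy
  obtain ⟨z, hz, heq⟩ := exists_sub_add_one_eq_neg_deriv fun z (hz : z ∈ Icc y (y + 1)) =>
    hasDerivAt_stretchedExp_mul_decayScale hα hr (hy0.trans_le hz.1)
  have hslope := slope_decayScale_le hα hr hx (hxy.trans hz.1.le)
  have hanti := stretchedExp_le_of_le hα.le hr.le (hy0.trans hz.1).le hz.2.le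
  rw [heq, neg_neg, mul_comm]
  exact mul_le_mul hanti (by linarith) (by linarith) (stretchedExp_pos α r z).le

theorem sub_mul_stretchedExp_add_one_le_sub {c y : ℝ} (hα : 0 < α) (hr : 0 < r) (hx : 0 < x)
    (hxy : x ≤ y) (hcy : c ≤ y) (hscale : decayScale α r x / x ≤ 1 / 4) :
    (y - c) * stretchedExp α r (y + 1) ≤
      2 * ((y - c) * (stretchedExp α r y * decayScale α r y) +
          2 * (stretchedExp α r y * decayScale α r y ^ 2)) -
        2 * ((y + 1 - c) * (stretchedExp α r (y + 1) * decayScale α r (y + 1)) +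
          2 * (stretchedExp α r (y + 1) * decayScale α r (y + 1) ^ 2)) := by
  have hy0 : 0 < y := hx.trans_le hxy
  obtain ⟨z, hz, heq⟩ := exists_sub_add_one_eq_neg_deriv fun z (hz : z ∈ Icc y (y + 1)) =>
    have hz0 : 0 < z := hy0.trans_le hz.1
    (((((hasDerivAt_id z).sub_const c).mul
      (hasDerivAt_stretchedExp_mul_decayScale hα hr hz0)).add
      ((hasDerivAt_stretchedExp_mul_decayScale_sq hα hr hz0).const_mul 2)).const_mul 2)
  have hz0 : 0 < z := hy0.trans hz.1
  have hslope := slope_decayScale_le hα hr hx (hxy.trans hz.1.le)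
  have hanti := stretchedExp_le_of_le hα.le hr.le hz0.le hz.2.le
  have hE := stretchedExp_pos α r z
  have hF := mul_pos hE (decayScale_pos hα hr hz0)
  refine le_of_le_of_eq ?_ heq.symm
  set s := (1 - r) * (decayScale α r z / z)
  calc (y - c) * stretchedExp α r (y + 1)
      ≤ (z - c) * stretchedExp α r z :=
        mul_le_mul (by linarith [hz.1]) hanti (stretchedExp_pos ..).le (by linarith [hz.1])
    _ ≤ 2 * ((z - c) * stretchedExp α r z * (1 - s) +
          stretchedExp α r z * decayScale α r z * (1 - 4 * s)) := by
        have h₁ : 0 ≤ (z - c) * stretchedExp α r z * (1 / 4 - s) :=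
          mul_nonneg (mul_nonneg (by linarith [hz.1]) hE.le) (by linarith)
        have h₂ : 0 ≤ stretchedExp α r z * decayScale α r z * (1 / 4 - s) :=
          mul_nonneg hF.le (by linarith)
        have h₃ : 0 ≤ (z - c) * stretchedExp α r z := mul_nonneg (by linarith [hz.1]) hE.le
        linarith
    _ = _ := by simp only [id]; ring

theorem stretchedExp_mul_decayScale_le_tsum {n : ℕ} (hα : 0 < α) (hr : 0 < r) (hr1 : r ≤ 1)
    (hn : 0 < n) :
    stretchedExp α r n * decayScale α r n ≤ ∑' j : ℕ, stretchedExp α r ((n : ℝ) + j) := by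
  have hlim : Tendsto (fun j : ℕ => (n : ℝ) + j) atTop atTop :=
    tendsto_atTop_add_const_left _ _ tendsto_natCast_atTop_atTop
  have htel := le_tsum_of_sub_succ_le (summable_stretchedExp_add hα hr n)
    ((tendsto_stretchedExp_mul_decayScale_atTop hα hr).comp hlim) fun j => by
      have := stretchedExp_mul_decayScale_sub_le hα hr hr1 (by positivity : (0 : ℝ) < n + j)
      simpa only [Function.comp_apply, Nat.cast_add, Nat.cast_one, add_assoc] using this
  simpa using htel

theorem tsum_stretchedExp_le {n : ℕ} (hα : 0 < α) (hr : 0 < r) (hn : 0 < n)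
    (hscale : decayScale α r n / n ≤ 1 / 2) :
    ∑' j : ℕ, stretchedExp α r ((n : ℝ) + j) ≤ stretchedExp α r n * decayScale α r n *
      (1 + 2 * (decayScale α r n / n) + 1 / decayScale α r n) := by
  have hn0 : (0 : ℝ) < n := Nat.cast_pos.2 hn
  have hE := stretchedExp_pos α r n
  have hq := decayScale_pos hα hr hn0
  have hX : 0 < decayScale α r n / n := div_pos hq hn0
  have htel := tsum_le_of_le_sub_succ
    (b := fun j : ℕ => (1 - decayScale α r n / n) * stretchedExp α r ((n : ℝ) + j + 1))
    (T := fun j : ℕ => stretchedExp α r (n + j) * decayScale α r (n + j))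
    (fun j => mul_nonneg (by linarith) (stretchedExp_pos ..).le)
    (fun j => (mul_pos (stretchedExp_pos ..) (decayScale_pos hα hr (by positivity))).le)
    (fun j => by
      have := mul_stretchedExp_add_one_le_sub hα hr hn0
        (le_add_of_nonneg_right j.cast_nonneg) (by linarith : decayScale α r n / n ≤ 1)
      simpa only [Nat.cast_add, Nat.cast_one, add_assoc] using this)
  rw [tsum_mul_left, Nat.cast_zero, add_zero] at htel
  rw [(summable_stretchedExp_add hα hr n).tsum_eq_zero_add]
  simp only [Nat.cast_zero, add_zero, Nat.cast_add, Nat.cast_one, ← add_assoc]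
  set X := decayScale α r n / n
  set R := ∑' j : ℕ, stretchedExp α r ((n : ℝ) + j + 1)
  have hR : R ≤ stretchedExp α r n * decayScale α r n * (1 + 2 * X) := by
    have : 0 ≤ R := tsum_nonneg fun j => (stretchedExp_pos ..).le
    have hF := mul_pos hE hq
    refine le_of_mul_le_mul_left ?_ (by linarith : 0 < 1 - X)
    nlinarith [mul_nonneg (mul_nonneg hF.le hX.le) (by linarith : 0 ≤ 1 - 2 * X)]
  have hhead : stretchedExp α r n = stretchedExp α r n * decayScale α r n *
      (1 / decayScale α r n) := by field_simp
  rw [mul_add]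
  linarith

theorem tsum_mul_stretchedExp_le {n : ℕ} (hα : 0 < α) (hr : 0 < r) (hn : 0 < n)
    (hscale : decayScale α r n / n ≤ 1 / 4) :
    ∑' j : ℕ, (j : ℝ) * stretchedExp α r ((n : ℝ) + j) ≤
      2 * (stretchedExp α r n * decayScale α r n) * (1 + 2 * decayScale α r n) := by
  have hn0 : (0 : ℝ) < n := Nat.cast_pos.2 hn
  have htel := tsum_le_of_le_sub_succ
    (b := fun j : ℕ => ((j : ℝ) + 1) * stretchedExp α r ((n : ℝ) + j + 1))
    (T := fun j : ℕ => 2 * (((j : ℝ) + 1) *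
      (stretchedExp α r (n + j) * decayScale α r (n + j)) +
      2 * (stretchedExp α r (n + j) * decayScale α r (n + j) ^ 2)))
    (fun j => by have := stretchedExp_pos α r ((n : ℝ) + j + 1); positivity)
    (fun j => by
      have := stretchedExp_pos α r ((n : ℝ) + j)
      have := decayScale_pos hα hr (by positivity : (0 : ℝ) < n + j)
      positivity)
    (fun j => by
      have := sub_mul_stretchedExp_add_one_le_sub (c := n - 1) (y := n + j) hα hr hn0
        (le_add_of_nonneg_right j.cast_nonneg) (by linarith [j.cast_nonneg (α := ℝ)]) hscale
      rw [show (n : ℝ) + j - (n - 1) = j + 1 by ring,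
        show (n : ℝ) + j + 1 - (n - 1) = j + 1 + 1 by ring] at this
      simpa only [Nat.cast_add, Nat.cast_one, ← add_assoc] using this)
  rw [(summable_mul_stretchedExp_add hα hr n).tsum_eq_zero_add]
  simp only [Nat.cast_zero, zero_mul, zero_add, Nat.cast_add, Nat.cast_one, ← add_assoc]
  refine htel.trans_eq ?_
  rw [Nat.cast_zero, add_zero]
  ring

end StretchedExp

/-! ### Fourier sums -/

/-- The Dirichlet kernel `1/2 + ∑_{k=1}^m cos (k t)`. -/
noncomputable def dirichletKernel (m : ℕ) (t : ℝ) : ℝ :=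
  1 / 2 + ∑ k ∈ Finset.Icc 1 m, cos (k * t)

@[fun_prop]
theorem continuous_dirichletKernel (m : ℕ) : Continuous (dirichletKernel m) := by
  unfold dirichletKernel; fun_prop

theorem periodic_cos_natCast_mul_sub (k : ℕ) (θ : ℝ) :
    Function.Periodic (fun t => cos (k * t - θ)) (2 * π) := fun t => by
  beta_reduce
  rw [← cos_add_nat_mul_two_pi (k * t - θ) k]
  ring_nf

theorem periodic_dirichletKernel (m : ℕ) : Function.Periodic (dirichletKernel m) (2 * π) :=
  fun t => by
    have hcos (k : ℕ) : cos (k * (t + 2 * π)) = cos (k * t) := by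
      simpa only [sub_zero] using periodic_cos_natCast_mul_sub k 0 t
    simp only [dirichletKernel, hcos]

@[fun_prop]
theorem continuous_fourierSum (m : ℕ) (f : ℝ → ℝ) : Continuous (fourierSum m f) := by
  unfold fourierSum; fun_prop

theorem fourierSum_eq_integral_dirichletKernel (m : ℕ) {f : ℝ → ℝ}
    (hf : IntervalIntegrable f volume (-π) π) (x : ℝ) :
    fourierSum m f x = 1 / π * ∫ y in (-π)..π, f y * dirichletKernel m (x - y) := by
  have hterm (k : ℕ) : fourierCoefA f k * cos (k * x) + fourierCoefB f k * sin (k * x) =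
      1 / π * ∫ y in (-π)..π, f y * cos (k * (x - y)) := by
    rw [fourierCoefA, fourierCoefB, mul_assoc, mul_assoc, ← mul_add,
      ← intervalIntegral.integral_mul_const, ← intervalIntegral.integral_mul_const,
      ← intervalIntegral.integral_add ((hf.mul_continuousOn (by fun_prop)).mul_const _)
        ((hf.mul_continuousOn (by fun_prop)).mul_const _)]
    congr 2 with y
    rw [mul_sub, cos_sub]
    ring
  have hexpand (y : ℝ) : f y * dirichletKernel m (x - y) =
      f y * (1 / 2) + ∑ k ∈ Finset.Icc 1 m, f y * cos (k * (x - y)) := by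
    rw [dirichletKernel, mul_add, Finset.mul_sum]
  have hint (k : ℕ) : IntervalIntegrable (fun y => f y * cos (k * (x - y))) volume (-π) π :=
    hf.mul_continuousOn (by fun_prop)
  have hsum : IntervalIntegrable (fun y => ∑ k ∈ Finset.Icc 1 m, f y * cos (k * (x - y)))
      volume (-π) π := by
    simpa only [Finset.sum_fn] using IntervalIntegrable.sum (Finset.Icc 1 m) fun k _ => hint k
  simp only [fourierSum, hterm, hexpand]
  rw [intervalIntegral.integral_add (hf.mul_const _) hsum,
    intervalIntegral.integral_finsetSum fun k _ => hint k, mul_add, Finset.mul_sum,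
    intervalIntegral.integral_mul_const]
  simp only [fourierCoefA, Nat.cast_zero, zero_mul, cos_zero, mul_one]
  ring

theorem fourierSum_add (m : ℕ) {f g : ℝ → ℝ} (hf : IntervalIntegrable f volume (-π) π)
    (hg : IntervalIntegrable g volume (-π) π) (x : ℝ) :
    fourierSum m (fun y => f y + g y) x = fourierSum m f x + fourierSum m g x := by
  rw [fourierSum_eq_integral_dirichletKernel m hf, fourierSum_eq_integral_dirichletKernel m hg,
    fourierSum_eq_integral_dirichletKernel m (hf.add hg), ← mul_add,
    ← intervalIntegral.integral_add (hf.mul_continuousOn (by fun_prop))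
      (hg.mul_continuousOn (by fun_prop))]
  simp only [add_mul]

theorem fourierSum_const_mul (m : ℕ) (c : ℝ) {f : ℝ → ℝ}
    (hf : IntervalIntegrable f volume (-π) π) (x : ℝ) :
    fourierSum m (fun y => c * f y) x = c * fourierSum m f x := by
  rw [fourierSum_eq_integral_dirichletKernel m hf,
    fourierSum_eq_integral_dirichletKernel m (hf.const_mul c)]
  simp only [mul_assoc, intervalIntegral.integral_const_mul]
  ring

theorem hasSum_fourierSum_of_summable_bound (m : ℕ) {g : ℕ → ℝ → ℝ} {b : ℕ → ℝ}
    (hg : ∀ j, Continuous (g j)) (hb : Summable b) (hgb : ∀ j y, ‖g j y‖ ≤ b j) (x : ℝ) :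
    HasSum (fun j => fourierSum m (g j) x) (fourierSum m (fun y => ∑' j, g j y) x) := by
  have hcont : Continuous fun y => ∑' j, g j y := continuous_tsum hg hb hgb
  rw [fourierSum_eq_integral_dirichletKernel m (hcont.intervalIntegrable _ _)]
  have hterm (j : ℕ) := fourierSum_eq_integral_dirichletKernel m
    ((hg j).intervalIntegrable (-π) π) x
  simp only [hterm]
  refine HasSum.mul_left _ (intervalIntegral.hasSum_integral_of_dominated_convergence
    (fun j y => b j * ‖dirichletKernel m (x - y)‖) (fun j => ?_) (fun j => ?_) ?_ ?_ ?_)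
  · exact Continuous.aestronglyMeasurable (by fun_prop)
  · refine .of_forall fun y _ => ?_
    rw [norm_mul]
    exact mul_le_mul_of_nonneg_right (hgb j y) (norm_nonneg _)
  · exact .of_forall fun y _ => hb.mul_right _
  · simp only [tsum_mul_right]
    exact Continuous.intervalIntegrable (by fun_prop) _ _
  · exact .of_forall fun y _ =>
      (Summable.of_norm_bounded hb fun j => hgb j y).hasSum.mul_right _

theorem integral_cos_intCast_mul_add (k : ℤ) (c : ℝ) :
    ∫ y in (-π)..π, cos (k * y + c) = if k = 0 then 2 * π * cos c else 0 := by
  split_ifs with hk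
  · simp only [hk, Int.cast_zero, zero_mul, zero_add, intervalIntegral.integral_const,
      smul_eq_mul]
    ring
  · rw [intervalIntegral.integral_comp_mul_add _ (Int.cast_ne_zero.2 hk), integral_cos,
      show (k : ℝ) * π + c = k * -π + c + k * (2 * π) by ring, sin_add_int_mul_two_pi, sub_self,
      smul_zero]

theorem integral_cos_mul_cos_natCast_mul_sub (j k : ℕ) (θ x : ℝ) :
    ∫ y in (-π)..π, cos (j * y - θ) * cos (k * (x - y)) =
      (if j = k then π * cos (j * x - θ) else 0) +
        if j + k = 0 then π * cos θ else 0 := by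
  have hprod (y : ℝ) : cos (j * y - θ) * cos (k * (x - y)) =
      1 / 2 * cos (((j : ℤ) - k : ℤ) * y + (k * x - θ)) +
        1 / 2 * cos (((j : ℤ) + k : ℤ) * y + (-(k * x) - θ)) := by
    have htwo := two_mul_cos_mul_cos (j * y - θ) (k * (x - y))
    push_cast
    rw [show ((j : ℝ) - k) * y + (k * x - θ) = j * y - θ + k * (x - y) by ring,
      show ((j : ℝ) + k) * y + (-(k * x) - θ) = j * y - θ - k * (x - y) by ring]
    linarith
  simp only [hprod]
  rw [intervalIntegral.integral_add (Continuous.intervalIntegrable (by fun_prop) _ _)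
      (Continuous.intervalIntegrable (by fun_prop) _ _), intervalIntegral.integral_const_mul,
    intervalIntegral.integral_const_mul, integral_cos_intCast_mul_add,
    integral_cos_intCast_mul_add]
  congr 1
  · by_cases hjk : j = k
    · simp only [hjk, sub_self, if_true]; ring
    · rw [if_neg hjk, if_neg (by omega), mul_zero]
  · by_cases hjk : j + k = 0
    · obtain ⟨rfl, rfl⟩ : j = 0 ∧ k = 0 := by omega
      simp only [Nat.cast_zero, zero_mul, neg_zero, zero_sub, cos_neg, add_zero, if_true]
      ring
    · rw [if_neg hjk, if_neg (by omega), mul_zero]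

theorem fourierSum_cos (m j : ℕ) (θ x : ℝ) :
    fourierSum m (fun y => cos (j * y - θ)) x = if j ≤ m then cos (j * x - θ) else 0 := by
  have hexpand (y : ℝ) : cos (j * y - θ) * dirichletKernel m (x - y) =
      1 / 2 * (cos (j * y - θ) * cos ((0 : ℕ) * (x - y))) +
        ∑ k ∈ Finset.Icc 1 m, cos (j * y - θ) * cos (k * (x - y)) := by
    rw [dirichletKernel, mul_add, Finset.mul_sum, Nat.cast_zero, zero_mul, cos_zero]
    ring
  rw [fourierSum_eq_integral_dirichletKernel m (Continuous.intervalIntegrable (by fun_prop) _ _)]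
  simp only [hexpand]
  rw [intervalIntegral.integral_add (Continuous.intervalIntegrable (by fun_prop) _ _)
      (Continuous.intervalIntegrable (by fun_prop) _ _), intervalIntegral.integral_const_mul,
    intervalIntegral.integral_finsetSum fun k _ =>
      Continuous.intervalIntegrable (by fun_prop) _ _]
  simp only [integral_cos_mul_cos_natCast_mul_sub]
  have hpos : ∑ k ∈ Finset.Icc 1 m, ((if j = k then π * cos (j * x - θ) else 0) +
      if j + k = 0 then π * cos θ else 0) =
        if j ∈ Finset.Icc 1 m then π * cos (j * x - θ) else 0 := by
    rw [← Finset.sum_ite_eq (Finset.Icc 1 m) j fun _ => π * cos (j * x - θ)]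
    refine Finset.sum_congr rfl fun k hk => ?_
    rw [if_neg (c := j + k = 0) (by have := Finset.mem_Icc.1 hk; omega), add_zero]
  rw [hpos]
  rcases Nat.eq_zero_or_pos j with rfl | hj
  · simp only [Nat.cast_zero, zero_mul, zero_sub, cos_neg, if_true, add_zero, Finset.mem_Icc,
      Nat.zero_le]
    norm_num
    field_simp
    ring
  · have : j + 0 ≠ 0 := by omega
    simp only [hj.ne', this, Finset.mem_Icc, Nat.succ_le_of_lt hj, true_and, if_false]
    split_ifs <;> field_simp <;> ring

theorem fourierSum_const (m : ℕ) (c x : ℝ) : fourierSum m (fun _ => c) x = c := by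
  have hone := fourierSum_cos m 0 0 x
  simp only [Nat.cast_zero, zero_mul, sub_zero, cos_zero, Nat.zero_le, if_true] at hone
  have h := fourierSum_const_mul m c (intervalIntegrable_const (c := (1 : ℝ))) x
  rwa [hone, mul_one] at h

section Convolution

variable {K φ : ℝ → ℝ}

theorem integrable_prod_kernel_mul (hK : Continuous K) (hper : Function.Periodic K (2 * π))
    (hφ : IntervalIntegrable φ volume (-π) π) :
    Integrable (fun p : ℝ × ℝ => K (p.1 - p.2) * φ p.2)
      ((volume.restrict (Ioc (-π) π)).prod (volume.restrict (Ioc (-π) π))) := by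
  obtain ⟨C, hC⟩ := (hper.isBounded_of_continuous two_pi_pos.ne' hK).exists_norm_le
  have hφ' := (intervalIntegrable_iff_integrableOn_Ioc_of_le (neg_le_self pi_pos.le)).1 hφ
  exact (hφ'.comp_snd _).bdd_mul (Continuous.aestronglyMeasurable (by fun_prop))
    (.of_forall fun p => hC _ ⟨_, rfl⟩)

theorem intervalIntegrable_convolution (hK : Continuous K)
    (hper : Function.Periodic K (2 * π)) (hφ : IntervalIntegrable φ volume (-π) π) :
    IntervalIntegrable (fun x => ∫ t in (-π)..π, K (x - t) * φ t) volume (-π) π := by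
  have hle : -π ≤ π := neg_le_self pi_pos.le
  have h := (integrable_prod_kernel_mul hK hper hφ).integral_prod_left
  rw [intervalIntegrable_iff_integrableOn_Ioc_of_le hle]
  simpa only [IntegrableOn, intervalIntegral.integral_of_le hle] using h

theorem integral_kernel_sub_mul_dirichletKernel (m : ℕ) (hK : Continuous K)
    (hper : Function.Periodic K (2 * π)) (x t : ℝ) :
    ∫ y in (-π)..π, K (y - t) * dirichletKernel m (x - y) = π * fourierSum m K (x - t) := by
  have hperiodic : Function.Periodic (fun y => K (y - t) * dirichletKernel m (x - y)) (2 * π) :=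
    fun y => by
      beta_reduce
      rw [add_sub_right_comm, hper, ← sub_sub, (periodic_dirichletKernel m).sub_eq]
  have hshift := hperiodic.intervalIntegral_add_eq (-π) (-π + t)
  rw [show -π + 2 * π = π by ring, show -π + t + 2 * π = π + t by ring] at hshift
  rw [hshift, ← intervalIntegral.integral_comp_add_right
      (fun y => K (y - t) * dirichletKernel m (x - y)) t,
    fourierSum_eq_integral_dirichletKernel m (hK.intervalIntegrable _ _)]
  simp only [add_sub_cancel_right, sub_sub, add_comm t]
  field_simp

theorem fourierSum_convolution (m : ℕ) (hK : Continuous K)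
    (hper : Function.Periodic K (2 * π)) (hφ : IntervalIntegrable φ volume (-π) π) (x : ℝ) :
    fourierSum m (fun y => ∫ t in (-π)..π, K (y - t) * φ t) x =
      ∫ t in (-π)..π, fourierSum m K (x - t) * φ t := by
  have hinner (t : ℝ) : ∫ y in (-π)..π, K (y - t) * φ t * dirichletKernel m (x - y) =
      π * (fourierSum m K (x - t) * φ t) := by
    rw [← mul_assoc, ← integral_kernel_sub_mul_dirichletKernel m hK hper,
      ← intervalIntegral.integral_mul_const]
    simp only [mul_right_comm]
  have hle : -π ≤ π := neg_le_self pi_pos.le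
  obtain ⟨C, hC⟩ := ((periodic_dirichletKernel m).isBounded_of_continuous two_pi_pos.ne'
    (continuous_dirichletKernel m)).exists_norm_le
  have hswap : Integrable (fun p : ℝ × ℝ => K (p.1 - p.2) * φ p.2 * dirichletKernel m (x - p.1))
      ((volume.restrict (Ioc (-π) π)).prod (volume.restrict (Ioc (-π) π))) :=
    (integrable_prod_kernel_mul hK hper hφ).mul_bdd
      (Continuous.aestronglyMeasurable (by fun_prop)) (.of_forall fun p => hC _ ⟨_, rfl⟩)
  rw [fourierSum_eq_integral_dirichletKernel m (intervalIntegrable_convolution hK hper hφ)]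
  simp only [intervalIntegral.integral_of_le hle, ← integral_mul_const] at hinner ⊢
  rw [integral_integral_swap hswap]
  simp only [hinner, integral_const_mul]
  field_simp

theorem sub_fourierSum_const_add_convolution (m : ℕ) (hK : Continuous K)
    (hper : Function.Periodic K (2 * π)) (hφ : IntervalIntegrable φ volume (-π) π)
    (c d x : ℝ) :
    (c + d * ∫ t in (-π)..π, K (x - t) * φ t) -
        fourierSum m (fun y => c + d * ∫ t in (-π)..π, K (y - t) * φ t) x =
      d * ∫ t in (-π)..π, (K (x - t) - fourierSum m K (x - t)) * φ t := by
  have hconv := intervalIntegrable_convolution hK hper hφ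
  rw [fourierSum_add m intervalIntegrable_const (hconv.const_mul d), fourierSum_const,
    fourierSum_const_mul m d hconv, fourierSum_convolution m hK hper hφ, add_sub_add_left_eq_sub,
    ← mul_sub, ← intervalIntegral.integral_sub (hφ.continuousOn_mul (by fun_prop))
      (hφ.continuousOn_mul (by fun_prop))]
  simp only [sub_mul]

end Convolution

/-- The tail `∑_{k ≥ n} a_k cos (k t - θ)` of a cosine series with phase shift `θ`. -/
noncomputable def cosTail (a : ℕ → ℝ) (θ : ℝ) (n : ℕ) (t : ℝ) : ℝ :=
  ∑' j : ℕ, a (n + j) * cos ((n + j : ℕ) * t - θ)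

theorem periodic_cosTail (a : ℕ → ℝ) (θ : ℝ) (n : ℕ) :
    Function.Periodic (cosTail a θ n) (2 * π) := fun t =>
  tsum_congr fun j => congrArg (a (n + j) * ·) (periodic_cos_natCast_mul_sub (n + j) θ t)

section CosTail

variable {a : ℕ → ℝ}

theorem norm_mul_cos_le (c y : ℝ) : ‖c * cos y‖ ≤ |c| := by
  rw [norm_mul]
  exact mul_le_of_le_one_right (abs_nonneg c) (abs_cos_le_one y)

theorem summable_abs_add (ha : Summable a) (n : ℕ) : Summable fun j => |a (n + j)| := by
  simpa only [add_comm] using (summable_nat_add_iff n).2 ha.abs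

theorem summable_cosTail (ha : Summable a) (θ : ℝ) (n : ℕ) (t : ℝ) :
    Summable fun j : ℕ => a (n + j) * cos ((n + j : ℕ) * t - θ) :=
  .of_norm_bounded (summable_abs_add ha n) fun _ => norm_mul_cos_le _ _

theorem continuous_cosTail (ha : Summable a) (θ : ℝ) (n : ℕ) : Continuous (cosTail a θ n) :=
  continuous_tsum (fun j => by fun_prop) (summable_abs_add ha n) fun _ _ => norm_mul_cos_le _ _

theorem abs_cosTail_le (ha : Summable a) (θ : ℝ) (n : ℕ) (t : ℝ) :
    |cosTail a θ n t| ≤ ∑' j, |a (n + j)| :=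
  tsum_of_norm_bounded (summable_abs_add ha n).hasSum fun _ => norm_mul_cos_le _ _

theorem fourierSum_cosTail_one (ha : Summable a) (θ : ℝ) (m : ℕ) (x : ℝ) :
    fourierSum m (cosTail a θ 1) x =
      ∑ j ∈ Finset.range m, a (1 + j) * cos ((1 + j : ℕ) * x - θ) := by
  have hterm (j : ℕ) : fourierSum m (fun y => a (1 + j) * cos ((1 + j : ℕ) * y - θ)) x =
      if j < m then a (1 + j) * cos ((1 + j : ℕ) * x - θ) else 0 := by
    rw [fourierSum_const_mul m _ (Continuous.intervalIntegrable (by fun_prop) _ _), fourierSum_cos,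
      mul_ite, mul_zero]
    exact if_congr (by omega) rfl rfl
  have hsum := hasSum_fourierSum_of_summable_bound m
    (g := fun j y => a (1 + j) * cos ((1 + j : ℕ) * y - θ)) (fun j => by fun_prop)
    (summable_abs_add ha 1) (fun _ _ => norm_mul_cos_le _ _) x
  refine hsum.unique ?_
  simp only [hterm]
  rw [← Finset.sum_congr rfl fun j hj => if_pos (Finset.mem_range.1 hj)]
  exact hasSum_sum_of_ne_finset_zero fun j hj => if_neg (by simpa using hj)

theorem cosTail_one_sub_fourierSum (ha : Summable a) (θ : ℝ) (m : ℕ) (x : ℝ) :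
    cosTail a θ 1 x - fourierSum m (cosTail a θ 1) x = cosTail a θ (m + 1) x := by
  rw [fourierSum_cosTail_one ha, cosTail, ← (summable_cosTail ha θ 1 x).sum_add_tsum_nat_add m,
    add_sub_cancel_left, cosTail]
  exact tsum_congr fun j => by rw [show 1 + (j + m) = m + 1 + j by ring]

end CosTail

theorem genPoissonKernel_eq_cosTail (α r β : ℝ) :
    genPoissonKernel α r β = cosTail (fun k => stretchedExp α r k) (β * π / 2) 1 := by
  ext t
  exact tsum_congr fun k => by
    simp only [stretchedExp, Nat.cast_add, Nat.cast_one, add_comm]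

/-! ### Hausdorff moment sequences -/

/-- `a` is a Hausdorff moment sequence: `a k = ∫ x ^ k` for a probability measure on `[0, 1]`. -/
def IsHausdorffMoment (a : ℕ → ℝ) : Prop :=
  ∃ μ : ProbabilityMeasure unitInterval, ∀ k, a k = ∫ x, (x : ℝ) ^ k ∂(μ : Measure unitInterval)

theorem integrable_coe_pow (μ : Measure unitInterval) [IsFiniteMeasure μ] (k : ℕ) :
    Integrable (fun x : unitInterval => (x : ℝ) ^ k) μ :=
  Continuous.integrable_of_hasCompactSupport (by fun_prop) (.of_compactSpace _)

theorem isClosed_setOf_isHausdorffMoment : IsClosed {a | IsHausdorffMoment a} := by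
  let moments (μ : ProbabilityMeasure unitInterval) (k : ℕ) : ℝ :=
    ∫ x, (x : ℝ) ^ k ∂(μ : Measure unitInterval)
  have hcont : Continuous moments := continuous_pi fun k =>
    ProbabilityMeasure.continuous_integral_boundedContinuousFunction
      (f := BoundedContinuousFunction.mkOfCompact
        (⟨fun x => (x : ℝ) ^ k, by fun_prop⟩ : C(unitInterval, ℝ)))
  convert (isCompact_range hcont).isClosed
  ext a
  simp only [mem_ofPred_eq, mem_range, IsHausdorffMoment, moments, funext_iff, eq_comm]

theorem isHausdorffMoment_integral {Ω : Type*} [MeasurableSpace Ω] (ν : Measure Ω)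
    [IsProbabilityMeasure ν] {Y : Ω → unitInterval} (hY : Measurable Y) :
    IsHausdorffMoment fun k => ∫ ω, (Y ω : ℝ) ^ k ∂ν :=
  have := Measure.isProbabilityMeasure_map (μ := ν) hY.aemeasurable
  ⟨⟨ν.map Y, this⟩, fun k =>
    (integral_map hY.aemeasurable (integrable_coe_pow _ k).aestronglyMeasurable).symm⟩

theorem isHausdorffMoment_one : IsHausdorffMoment fun _ => 1 := by
  simpa using isHausdorffMoment_integral (Measure.dirac ())
    (measurable_const (a := (1 : unitInterval)))

namespace IsHausdorffMoment

variable {a b : ℕ → ℝ}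

theorem mul (ha : IsHausdorffMoment a) (hb : IsHausdorffMoment b) :
    IsHausdorffMoment fun k => a k * b k := by
  obtain ⟨μ, hμ⟩ := ha
  obtain ⟨ν, hν⟩ := hb
  have h := isHausdorffMoment_integral ((μ : Measure unitInterval).prod (ν : Measure unitInterval))
    (measurable_fst.mul measurable_snd)
  simpa only [hμ, hν, ← integral_prod_mul, Pi.mul_apply, Icc.coe_mul, mul_pow] using h

theorem pow (ha : IsHausdorffMoment a) (m : ℕ) : IsHausdorffMoment fun k => a k ^ m := by
  induction m with
  | zero => simpa only [pow_zero] using isHausdorffMoment_one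
  | succ m ih => simpa only [pow_succ] using ih.mul ha

theorem convexComb_one (ha : IsHausdorffMoment a) {c : ℝ} (hc0 : 0 ≤ c) (hc1 : c ≤ 1) :
    IsHausdorffMoment fun k => 1 + c * (a k - 1) := by
  obtain ⟨μ, hμ⟩ := ha
  let ν : Measure unitInterval :=
    ENNReal.ofReal c • (μ : Measure unitInterval) + ENNReal.ofReal (1 - c) • Measure.dirac 1
  have hν : IsProbabilityMeasure ν := ⟨by
    simp only [ν, Measure.coe_add, Measure.coe_smul, Pi.add_apply, Pi.smul_apply, measure_univ,
      smul_eq_mul, mul_one]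
    rw [← ENNReal.ofReal_add hc0 (sub_nonneg.2 hc1), add_sub_cancel, ENNReal.ofReal_one]⟩
  refine ⟨⟨ν, hν⟩, fun k => ?_⟩
  change _ = ∫ x, (x : ℝ) ^ k ∂ν
  rw [integral_add_measure ((integrable_coe_pow _ k).smul_measure ENNReal.ofReal_ne_top)
      ((integrable_coe_pow _ k).smul_measure ENNReal.ofReal_ne_top), integral_smul_measure,
    integral_smul_measure, integral_dirac, ← hμ, ENNReal.toReal_ofReal hc0,
    ENNReal.toReal_ofReal (sub_nonneg.2 hc1), Icc.coe_one, one_pow, smul_eq_mul,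
    smul_eq_mul]
  ring

theorem exp_mul_sub_one (ha : IsHausdorffMoment a) {c : ℝ} (hc : 0 ≤ c) :
    IsHausdorffMoment fun k => exp (c * (a k - 1)) := by
  have hlim : Tendsto (fun (m : ℕ) k => (1 + c * (a k - 1) / m) ^ m) atTop
      (𝓝 fun k => exp (c * (a k - 1))) :=
    tendsto_pi_nhds.2 fun k => tendsto_one_add_div_pow_exp (c * (a k - 1))
  refine isClosed_setOf_isHausdorffMoment.mem_of_tendsto hlim ?_
  filter_upwards [tendsto_natCast_atTop_atTop.eventually_ge_atTop c, eventually_gt_atTop 0]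
    with m hcm hm
  have hcomb := ha.convexComb_one (div_nonneg hc m.cast_nonneg)
    ((div_le_one (Nat.cast_pos.2 hm)).2 hcm)
  simpa only [mem_ofPred_eq, mul_div_right_comm] using hcomb.pow m

end IsHausdorffMoment

theorem isHausdorffMoment_exp_neg_integral {Ω : Type*} [MeasurableSpace Ω] (ν : Measure Ω)
    [IsFiniteMeasure ν] {Y : Ω → unitInterval} (hY : Measurable Y) :
    IsHausdorffMoment fun k => exp (-∫ ω, (1 - (Y ω : ℝ) ^ k) ∂ν) := by
  rcases eq_zero_or_neZero ν with rfl | hν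
  · simpa only [integral_zero_measure, neg_zero, exp_zero] using isHausdorffMoment_one
  have hmass : ν.real univ ≠ 0 := measureReal_univ_ne_zero
  have hint (k : ℕ) : Integrable (fun ω => (Y ω : ℝ) ^ k) ν :=
    (integrable_coe_pow (ν.map Y) k).comp_measurable hY
  have h := (isHausdorffMoment_integral ((ν univ)⁻¹ • ν) hY).exp_mul_sub_one
    (measureReal_nonneg (μ := ν) (s := univ))
  convert h using 3 with k
  rw [integral_smul_measure, integral_sub (integrable_const _) (hint k), integral_const,
    ENNReal.toReal_inv, smul_eq_mul, smul_eq_mul, mul_one]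
  change _ = ν.real univ * ((ν.real univ)⁻¹ * _ - 1)
  field_simp
  ring

theorem isHausdorffMoment_exp_neg_integral_mul {Ω : Type*} [MeasurableSpace Ω] {ν : Measure Ω}
    {w : Ω → ℝ} (hw : Integrable w ν) (hw0 : 0 ≤ᵐ[ν] w) {Y : Ω → unitInterval}
    (hY : Measurable Y) :
    IsHausdorffMoment fun k => exp (-∫ ω, w ω * (1 - (Y ω : ℝ) ^ k) ∂ν) := by
  have := isFiniteMeasure_withDensity_ofReal hw.2
  have h := isHausdorffMoment_exp_neg_integral (ν.withDensity fun ω => ENNReal.ofReal (w ω)) hY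
  convert h using 4 with k
  rw [integral_withDensity_eq_integral_toReal_smul₀ hw.aemeasurable.ennreal_ofReal
    (.of_forall fun _ => ENNReal.ofReal_lt_top)]
  refine integral_congr_ae ?_
  filter_upwards [hw0] with ω hω
  rw [ENNReal.toReal_ofReal hω, smul_eq_mul]

section LevyMeasure

variable {r : ℝ}

theorem integrableOn_one_sub_exp_neg_mul_rpow (hr0 : 0 < r) (hr1 : r < 1) :
    IntegrableOn (fun s : ℝ => (1 - exp (-s)) * s ^ (-1 - r)) (Ioi 0) := by
  have hmeas (t : Set ℝ) : AEStronglyMeasurable (fun s : ℝ => (1 - exp (-s)) * s ^ (-1 - r))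
      (volume.restrict t) := Measurable.aestronglyMeasurable (by fun_prop)
  rw [← Ioc_union_Ioi_eq_Ioi zero_le_one, integrableOn_union]
  constructor
  · have hdom : IntegrableOn (fun s : ℝ => s ^ (-r)) (Ioc 0 1) :=
      (intervalIntegrable_iff_integrableOn_Ioc_of_le zero_le_one).1
        (intervalIntegral.intervalIntegrable_rpow' (by linarith))
    refine hdom.mono' (hmeas _) ((ae_restrict_iff' measurableSet_Ioc).2 (.of_forall fun s hs => ?_))
    have hexp : 0 ≤ 1 - exp (-s) := sub_nonneg.2 (exp_le_one_iff.2 (neg_nonpos.2 hs.1.le))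
    rw [norm_of_nonneg (mul_nonneg hexp (rpow_nonneg hs.1.le _)),
      show -r = 1 + (-1 - r) by ring, rpow_add hs.1, rpow_one]
    exact mul_le_mul_of_nonneg_right (by linarith [add_one_le_exp (-s)]) (rpow_nonneg hs.1.le _)
  · have hdom : IntegrableOn (fun s : ℝ => s ^ (-1 - r)) (Ioi 1) :=
      integrableOn_Ioi_rpow_of_lt (by linarith) one_pos
    refine hdom.mono' (hmeas _) ((ae_restrict_iff' measurableSet_Ioi).2 (.of_forall fun s hs => ?_))
    have hs0 : 0 < s := one_pos.trans hs
    have hexp : 0 ≤ 1 - exp (-s) := sub_nonneg.2 (exp_le_one_iff.2 (neg_nonpos.2 hs0.le))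
    rw [norm_of_nonneg (mul_nonneg hexp (rpow_nonneg hs0.le _))]
    exact mul_le_of_le_one_left (rpow_nonneg hs0.le _) (sub_le_self _ (exp_pos _).le)

theorem integral_one_sub_exp_neg_mul_rpow_pos (hr0 : 0 < r) (hr1 : r < 1) :
    0 < ∫ s in Ioi (0 : ℝ), (1 - exp (-s)) * s ^ (-1 - r) := by
  have hpos {s : ℝ} (hs : s ∈ Ioi 0) : 0 < (1 - exp (-s)) * s ^ (-1 - r) :=
    mul_pos (sub_pos.2 (exp_lt_one_iff.2 (neg_neg_of_pos hs))) (rpow_pos_of_pos hs _)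
  rw [setIntegral_pos_iff_support_of_nonneg_ae
    ((ae_restrict_iff' measurableSet_Ioi).2 (.of_forall fun s hs => (hpos hs).le))
    (integrableOn_one_sub_exp_neg_mul_rpow hr0 hr1),
    inter_eq_right.2 fun s hs => Function.mem_support.2 (hpos hs).ne', volume_Ioi]
  exact ENNReal.zero_lt_top

theorem one_sub_exp_neg_mul_mul_rpow_eq {k s : ℝ} (hk : 0 < k) (hs : 0 < s) :
    (1 - exp (-(k * s))) * s ^ (-1 - r) =
      k ^ (1 + r) * ((1 - exp (-(k * s))) * (k * s) ^ (-1 - r)) := by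
  rw [mul_rpow hk.le hs.le, mul_left_comm, ← mul_assoc (k ^ (1 + r)), ← rpow_add hk,
    show 1 + r + (-1 - r) = 0 by ring, rpow_zero, one_mul]

theorem integrableOn_one_sub_exp_neg_mul_mul_rpow (hr0 : 0 < r) (hr1 : r < 1) {k : ℝ}
    (hk : 0 ≤ k) : IntegrableOn (fun s : ℝ => (1 - exp (-(k * s))) * s ^ (-1 - r)) (Ioi 0) := by
  rcases hk.eq_or_lt with rfl | hk
  · simp
  refine IntegrableOn.congr_fun ?_
    (fun s hs => (one_sub_exp_neg_mul_mul_rpow_eq hk hs).symm) measurableSet_Ioi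
  refine Integrable.const_mul ?_ _
  refine (integrableOn_Ioi_comp_mul_left_iff
    (fun s : ℝ => (1 - exp (-s)) * s ^ (-1 - r)) 0 hk).2 ?_
  rw [mul_zero]
  exact integrableOn_one_sub_exp_neg_mul_rpow hr0 hr1

theorem integral_one_sub_exp_neg_mul_mul_rpow (hr0 : 0 < r) {k : ℝ} (hk : 0 ≤ k) :
    ∫ s in Ioi (0 : ℝ), (1 - exp (-(k * s))) * s ^ (-1 - r) =
      k ^ r * ∫ s in Ioi (0 : ℝ), (1 - exp (-s)) * s ^ (-1 - r) := by
  rcases hk.eq_or_lt with rfl | hk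
  · simp [hr0.ne']
  rw [setIntegral_congr_fun measurableSet_Ioi fun s hs => one_sub_exp_neg_mul_mul_rpow_eq hk hs,
    integral_const_mul,
    integral_comp_mul_left_Ioi (fun s : ℝ => (1 - exp (-s)) * s ^ (-1 - r)) 0 hk, mul_zero,
    smul_eq_mul, ← mul_assoc, rpow_add hk, rpow_one]
  field_simp

/-- The map `s ↦ e^{-s}` of `[0, ∞)` into `[0, 1]`, extended to an even function. -/
noncomputable def expNegAbs (s : ℝ) : unitInterval :=
  ⟨exp (-|s|), (exp_pos _).le, exp_le_one_iff.2 (neg_nonpos.2 (abs_nonneg s))⟩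

theorem measurable_expNegAbs : Measurable expNegAbs :=
  Measurable.subtype_mk (by fun_prop)

theorem coe_expNegAbs_pow {s : ℝ} (hs : 0 ≤ s) (k : ℕ) :
    (expNegAbs s : ℝ) ^ k = exp (-(k * s)) := by
  change exp (-|s|) ^ k = _
  rw [abs_of_nonneg hs, ← exp_nat_mul, mul_neg]

-- A Lévy density `w` may have infinite mass near `0`; its truncations to `(ε, ∞)` are finite and
-- yield compound Poisson laws, whose limit as `ε → 0` is the required one.
theorem isHausdorffMoment_exp_neg_levyIntegral {w : ℝ → ℝ} (hw0 : ∀ s, 0 < s → 0 ≤ w s)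
    (hw : ∀ ε, 0 < ε → IntegrableOn w (Ioi ε))
    (hint : ∀ k : ℕ, IntegrableOn (fun s => (1 - exp (-(k * s))) * w s) (Ioi 0)) :
    IsHausdorffMoment fun k => exp (-∫ s in Ioi 0, (1 - exp (-(k * s))) * w s) := by
  let ε (m : ℕ) : ℝ := 1 / ((m : ℝ) + 1)
  have hε (m : ℕ) : 0 < ε m := Nat.one_div_pos_of_nat
  have hlim : Tendsto (fun m (k : ℕ) => exp (-∫ s in Ioi (ε m), (1 - exp (-(k * s))) * w s
      ∂volume.restrict (Ioi 0))) atTop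
      (𝓝 fun k => exp (-∫ s in Ioi 0, (1 - exp (-(k * s))) * w s)) :=
    tendsto_pi_nhds.2 fun k => (continuous_exp.tendsto _).comp ((aecover_Ioi_of_Ioi
      tendsto_one_div_add_atTop_nhds_zero_nat).integral_tendsto_of_countably_generated (hint k)).neg
  refine isClosed_setOf_isHausdorffMoment.mem_of_tendsto hlim (.of_forall fun m => ?_)
  have hmem : ∀ᵐ s ∂(volume.restrict (Ioi 0)).restrict (Ioi (ε m)), 0 < s := by
    filter_upwards [ae_restrict_mem measurableSet_Ioi] with s hs using (hε m).trans hs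
  have hfinite : IntegrableOn w (Ioi (ε m)) (volume.restrict (Ioi 0)) :=
    (hw _ (hε m)).mono_measure Measure.restrict_le_self
  have h := isHausdorffMoment_exp_neg_integral_mul hfinite
    (hmem.mono fun s hs => hw0 s hs) measurable_expNegAbs
  rw [mem_ofPred_eq]
  convert h using 4 with k
  refine integral_congr_ae (hmem.mono fun s hs => ?_)
  beta_reduce
  rw [coe_expNegAbs_pow hs.le, mul_comm]

theorem isHausdorffMoment_stretchedExp {α : ℝ} (hα : 0 < α) (hr0 : 0 < r) (hr1 : r < 1) :
    IsHausdorffMoment fun k => stretchedExp α r k := by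
  set I := ∫ s in Ioi (0 : ℝ), (1 - exp (-s)) * s ^ (-1 - r) with hIdef
  have hI : 0 < I := integral_one_sub_exp_neg_mul_rpow_pos hr0 hr1
  have h := isHausdorffMoment_exp_neg_levyIntegral (w := fun s => s ^ (-1 - r) * (α / I))
    (fun s hs => by positivity)
    (fun ε hε => (integrableOn_Ioi_rpow_of_lt (by linarith) hε).mul_const _)
    (fun k => by
      simpa only [IntegrableOn, ← mul_assoc] using
        (integrableOn_one_sub_exp_neg_mul_mul_rpow hr0 hr1 k.cast_nonneg).mul_const (α / I))
  convert h using 2 with k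
  simp only [← mul_assoc]
  rw [integral_mul_const, integral_one_sub_exp_neg_mul_mul_rpow hr0 k.cast_nonneg, ← hIdef,
    stretchedExp, neg_mul]
  field_simp

end LevyMeasure

/-! ### Analyticity of cosine series with Hausdorff moment coefficients -/

/-- Integration against a finite measure as a continuous linear functional on
`C([0, 1], ℂ)`. -/
noncomputable def integralFunctional (μ : Measure unitInterval) [IsFiniteMeasure μ] :
    C(unitInterval, ℂ) →L[ℂ] ℂ :=
  LinearMap.mkContinuous
    { toFun := fun f => ∫ x, f x ∂μ
      map_add' := fun f g => integral_add (f.continuous.integrable_of_hasCompactSupport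
        (.of_compactSpace f)) (g.continuous.integrable_of_hasCompactSupport (.of_compactSpace g))
      map_smul' := fun c f => integral_const_mul c f }
    (μ.real univ)
    fun f => by
      rw [mul_comm]
      exact norm_integral_le_of_norm_le_const (.of_forall f.norm_coe_le_norm)

/-- The inclusion `[0, 1] → ℂ` as an element of the Banach algebra `C([0, 1], ℂ)`. -/
def coordinate : C(unitInterval, ℂ) := ⟨fun x => ((x : ℝ) : ℂ), by fun_prop⟩

/-- The generating function `∑ a_k z^k = ∫ dμ(x) / (1 - z x)` of the moments of `μ`, continued
analytically to all `z` for which `1 - z x` is invertible in `C([0, 1], ℂ)`. -/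
noncomputable def momentGenerating (μ : Measure unitInterval) [IsFiniteMeasure μ] (z : ℂ) : ℂ :=
  integralFunctional μ (Ring.inverse (1 - z • coordinate))

section MomentGenerating

variable {μ : Measure unitInterval} {z : ℂ}

theorem analyticAt_momentGenerating [IsFiniteMeasure μ] (hz : IsUnit (1 - z • coordinate)) :
    AnalyticAt ℂ (momentGenerating μ) z := by
  have hopen : IsOpen {w : ℂ | IsUnit (1 - w • coordinate)} :=
    Units.isOpen.preimage (f := fun w : ℂ => 1 - w • coordinate) (by fun_prop)
  refine DifferentiableOn.analyticAt (fun w hw => ?_) (hopen.mem_nhds hz)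
  have hdiff : DifferentiableAt ℂ (fun w : ℂ => 1 - w • coordinate) w := by fun_prop
  exact ((integralFunctional μ).differentiableAt.comp w
    ((differentiableAt_inverse hw).comp w hdiff)).differentiableWithinAt

theorem momentGenerating_eq_integral [IsFiniteMeasure μ] (hz : IsUnit (1 - z • coordinate)) :
    momentGenerating μ z = ∫ x, (1 - z * ((x : ℝ) : ℂ))⁻¹ ∂μ := by
  refine integral_congr_ae (.of_forall fun x => eq_inv_of_mul_eq_one_left ?_)
  exact DFunLike.congr_fun (Ring.inverse_mul_cancel _ hz) x

theorem ae_coe_lt_one_of_tendsto_moments [IsFiniteMeasure μ]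
    (hμ : Tendsto (fun k => ∫ x, (x : ℝ) ^ k ∂μ) atTop (𝓝 0)) :
    ∀ᵐ x : unitInterval ∂μ, (x : ℝ) < 1 := by
  have hmarkov (k : ℕ) : μ.real {x : unitInterval | (1 : ℝ) ≤ x} ≤ ∫ x, (x : ℝ) ^ k ∂μ := by
    have hpow : μ.real {x : unitInterval | (1 : ℝ) ≤ (x : ℝ) ^ k} ≤ ∫ x, (x : ℝ) ^ k ∂μ := by
      simpa only [one_mul] using mul_meas_ge_le_integral_of_nonneg
        (.of_forall fun x : unitInterval => pow_nonneg x.2.1 k) (integrable_coe_pow μ k) 1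
    refine (measureReal_mono fun (x : unitInterval) hx => ?_).trans hpow
    exact one_le_pow₀ (mem_ofPred_eq ▸ hx)
  have hzero : μ.real {x : unitInterval | (1 : ℝ) ≤ x} = 0 :=
    le_antisymm (ge_of_tendsto' hμ hmarkov) measureReal_nonneg
  simpa only [ae_iff, not_lt] using (measureReal_eq_zero_iff (measure_ne_top μ _)).1 hzero

theorem hasSum_momentGenerating [IsFiniteMeasure μ]
    (hμ : Summable fun k => ∫ x, (x : ℝ) ^ k ∂μ) (hz : ‖z‖ ≤ 1)
    (hu : IsUnit (1 - z • coordinate)) :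
    HasSum (fun k => z ^ k * (∫ x, (x : ℝ) ^ k ∂μ : ℝ)) (momentGenerating μ z) := by
  have hmoment (k : ℕ) : ∫ x : unitInterval, z ^ k * (((x : ℝ) ^ k : ℝ) : ℂ) ∂μ =
      z ^ k * (∫ x, (x : ℝ) ^ k ∂μ : ℝ) := by
    rw [integral_const_mul, integral_complex_ofReal]
  have hnorm (k : ℕ) (x : unitInterval) : ‖z ^ k * (((x : ℝ) ^ k : ℝ) : ℂ)‖ ≤ (x : ℝ) ^ k := by
    rw [norm_mul, norm_pow, Complex.norm_of_nonneg (pow_nonneg x.2.1 k)]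
    exact mul_le_of_le_one_left (pow_nonneg x.2.1 k) (pow_le_one₀ (norm_nonneg z) hz)
  have hint (k : ℕ) : Integrable (fun x : unitInterval => z ^ k * (((x : ℝ) ^ k : ℝ) : ℂ)) μ :=
    (integrable_coe_pow μ k).ofReal.const_mul _
  have hsum := hasSum_integral_of_summable_integral_norm hint <|
    hμ.of_nonneg_of_le (fun k => integral_nonneg fun x => norm_nonneg _)
      fun k => integral_mono (hint k).norm (integrable_coe_pow μ k) (hnorm k)
  simp only [hmoment] at hsum
  suffices hgeom : ∫ x, (1 - z * ((x : ℝ) : ℂ))⁻¹ ∂μ =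
      ∫ x : unitInterval, ∑' k : ℕ, z ^ k * (((x : ℝ) ^ k : ℝ) : ℂ) ∂μ by
    rw [momentGenerating_eq_integral hu, hgeom]
    exact hsum
  refine integral_congr_ae ?_
  filter_upwards [ae_coe_lt_one_of_tendsto_moments hμ.tendsto_atTop_zero] with x hx
  have hlt : ‖z * ((x : ℝ) : ℂ)‖ < 1 := by
    rw [norm_mul, Complex.norm_of_nonneg x.2.1]
    exact (mul_le_of_le_one_left x.2.1 hz).trans_lt hx
  simp only [Complex.ofReal_pow, ← mul_pow]
  exact (tsum_geometric_of_norm_lt_one hlt).symm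

theorem isUnit_one_sub_exp_smul_coordinate {t : ℝ} (ht : t ∈ Ioo 0 (2 * π)) :
    IsUnit (1 - Complex.exp (t * Complex.I) • coordinate) := by
  refine (ContinuousMap.isUnit_iff_forall_ne_zero _).2 fun x hx => ?_
  have heq : Complex.exp (t * Complex.I) * ((x : ℝ) : ℂ) = 1 := (sub_eq_zero.1 hx).symm
  have hx1 : (x : ℝ) = 1 := by
    have h := congrArg norm heq
    rwa [norm_mul, Complex.norm_exp_ofReal_mul_I, one_mul, norm_one,
      Complex.norm_of_nonneg x.2.1] at h
  have hcos : cos t = 1 := by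
    have h := congrArg Complex.re heq
    rwa [hx1, Complex.ofReal_one, mul_one, Complex.exp_ofReal_mul_I_re, Complex.one_re] at h
  have := (cos_eq_one_iff_of_lt_of_lt (by linarith [ht.1, two_pi_pos]) ht.2).1 hcos
  exact ht.1.ne' this

end MomentGenerating

theorem exp_neg_mul_I_mul_exp_mul_I_pow_re (θ t c : ℝ) (k : ℕ) :
    (Complex.exp (-θ * Complex.I) * (Complex.exp (t * Complex.I) ^ k * c)).re =
      c * cos (k * t - θ) := by
  rw [← Complex.exp_nat_mul, ← mul_assoc, ← Complex.exp_add, Complex.re_mul_ofReal,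
    show -(θ : ℂ) * Complex.I + k * (t * Complex.I) = ((k * t - θ : ℝ) : ℂ) * Complex.I by
      push_cast; ring, Complex.exp_ofReal_mul_I_re, mul_comm]

theorem IsHausdorffMoment.analyticOnNhd_cosTail_one {a : ℕ → ℝ} (ha : IsHausdorffMoment a)
    (hs : Summable a) (θ : ℝ) : AnalyticOnNhd ℝ (cosTail a θ 1) (Ioo 0 (2 * π)) := by
  obtain ⟨μ, hμ⟩ := ha
  let G (w : ℂ) : ℂ := Complex.exp (-θ * Complex.I) *
    (momentGenerating (μ : Measure unitInterval) (Complex.exp (w * Complex.I)) - a 0)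
  have hre (t : ℝ) (ht : t ∈ Ioo 0 (2 * π)) : cosTail a θ 1 t = (G t).re := by
    have hsum := hasSum_momentGenerating (μ := (μ : Measure unitInterval))
      (by simpa only [← hμ] using hs) (Complex.norm_exp_ofReal_mul_I t).le
      (isUnit_one_sub_exp_smul_coordinate ht)
    simp only [← hμ] at hsum
    have htail := ((hasSum_nat_add_iff' 1).2 hsum).mul_left (Complex.exp (-θ * Complex.I))
    rw [Finset.sum_range_one, pow_zero, one_mul] at htail
    rw [← (Complex.hasSum_re htail).tsum_eq]
    exact tsum_congr fun j => by rw [exp_neg_mul_I_mul_exp_mul_I_pow_re, add_comm]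
  intro t ht
  have hgen : AnalyticAt ℂ (fun w => momentGenerating μ (Complex.exp (w * Complex.I))) t :=
    AnalyticAt.comp (f := fun w : ℂ => Complex.exp (w * Complex.I))
      (analyticAt_momentGenerating (isUnit_one_sub_exp_smul_coordinate ht)) (by fun_prop)
  have hG : AnalyticAt ℂ G t := analyticAt_const.mul (hgen.sub analyticAt_const)
  refine (((Complex.reCLM.analyticAt _).comp
    (hG.restrictScalars (𝕜 := ℝ))).comp (Complex.ofRealCLM.analyticAt t)).congr ?_
  filter_upwards [isOpen_Ioo.mem_nhds ht] with s hs using (hre s hs).symm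

section NonvanishingAlmostEverywhere

variable {a : ℕ → ℝ}

theorem exists_cosTail_one_ne_zero (hs : Summable a) (ha : a 1 ≠ 0) (θ : ℝ) :
    ∃ t ∈ Ioo 0 (2 * π), cosTail a θ 1 t ≠ 0 := by
  by_contra! hzero
  have hIcc : EqOn (cosTail a θ 1) 0 (Icc 0 (2 * π)) := by
    rw [← closure_Ioo two_pi_pos.ne]
    exact Set.EqOn.closure hzero (continuous_cosTail hs θ 1) continuous_zero
  have hall : cosTail a θ 1 = fun _ => 0 := funext fun t => by
    obtain ⟨s, hs, hts⟩ := (periodic_cosTail a θ 1).exists_mem_Ico₀ two_pi_pos t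
    rw [hts]
    exact hIcc (Ico_subset_Icc_self hs)
  have hfirst := fourierSum_cosTail_one hs θ 1 θ
  rw [hall, fourierSum_const] at hfirst
  exact ha (by simpa using hfirst.symm)

theorem ae_of_periodic_of_ae_restrict_Ioc {p : ℝ → Prop} {T : ℝ} (hT : 0 < T)
    (hp : Function.Periodic p T) (h : ∀ᵐ t ∂volume.restrict (Ioc 0 T), p t) : ∀ᵐ t, p t := by
  rw [ae_restrict_iff' measurableSet_Ioc] at h
  have htranslate (m : ℤ) : ∀ᵐ t : ℝ, t + m • T ∈ Ioc 0 T → p (t + m • T) :=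
    (measurePreserving_add_right volume (m • T)).quasiMeasurePreserving.ae h
  filter_upwards [ae_all_iff.2 htranslate] with t ht
  obtain ⟨m, hm, -⟩ := existsUnique_add_zsmul_mem_Ioc hT t 0
  rw [zero_add] at hm
  exact (hp.zsmul m t).mp (ht m hm)

theorem IsHausdorffMoment.ae_cosTail_one_ne_zero (ha : IsHausdorffMoment a) (hs : Summable a)
    (ha1 : a 1 ≠ 0) (θ : ℝ) : ∀ᵐ t, cosTail a θ 1 t ≠ 0 := by
  obtain ⟨t₀, ht₀, hne⟩ := exists_cosTail_one_ne_zero hs ha1 θ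
  have hcodiscrete := (ha.analyticOnNhd_cosTail_one hs θ).preimage_zero_mem_codiscreteWithin hne
    ht₀ (isConnected_Ioo two_pi_pos)
  refine ae_of_periodic_of_ae_restrict_Ioc two_pi_pos
    (fun t => by rw [periodic_cosTail a θ 1 t]) ?_
  rw [← restrict_Ioo_eq_restrict_Ioc]
  exact ae_restrict_le_codiscreteWithin (μ := volume) measurableSet_Ioo hcodiscrete

end NonvanishingAlmostEverywhere

/-! ### Uniform deviation of Fourier sums on the class -/

section Periodic

variable {f : ℝ → ℝ}

theorem intervalIntegrable_neg_pi_pi_iff (hf : Function.Periodic f (2 * π)) :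
    IntervalIntegrable f volume (-π) π ↔ IntegrableOn f (Ioc 0 (2 * π)) := by
  rw [← intervalIntegrable_iff_integrableOn_Ioc_of_le two_pi_pos.le]
  constructor <;> intro h
  · exact hf.intervalIntegrable two_pi_pos.ne' (t := -π)
      (by rwa [show -π + 2 * π = π by ring]) _ _
  · exact hf.intervalIntegrable two_pi_pos.ne' (t := 0) (by rwa [zero_add]) _ _

theorem integral_neg_pi_pi_eq (hf : Function.Periodic f (2 * π)) :
    ∫ t in (-π)..π, f t = ∫ t in (0 : ℝ)..(2 * π), f t := by
  have h := hf.intervalIntegral_add_eq (-π) 0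
  rwa [zero_add, show -π + 2 * π = π by ring] at h

end Periodic

theorem aestronglyMeasurable_of_ae_ne_zero_of_mul {X : Type*} [MeasurableSpace X] {μ : Measure X}
    {g φ : X → ℝ} (hg : AEStronglyMeasurable g μ) (hne : ∀ᵐ t ∂μ, g t ≠ 0)
    (hmul : AEStronglyMeasurable (fun t => g t * φ t) μ) : AEStronglyMeasurable φ μ := by
  refine (hg.aemeasurable.inv.aestronglyMeasurable.mul hmul).congr ?_
  filter_upwards [hne] with t ht using inv_mul_cancel_left₀ ht _

section PoissonClass

variable {α r β : ℝ}

theorem continuous_genPoissonKernel (hα : 0 < α) (hr : 0 < r) (β : ℝ) :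
    Continuous (genPoissonKernel α r β) := by
  rw [genPoissonKernel_eq_cosTail]
  exact continuous_cosTail (summable_stretchedExp hα hr) _ 1

theorem periodic_genPoissonKernel (α r β : ℝ) :
    Function.Periodic (genPoissonKernel α r β) (2 * π) := by
  rw [genPoissonKernel_eq_cosTail]
  exact periodic_cosTail _ _ 1

theorem ae_genPoissonKernel_sub_ne_zero (hα : 0 < α) (hr0 : 0 < r) (hr1 : r < 1) (β x : ℝ) :
    ∀ᵐ t, genPoissonKernel α r β (x - t) ≠ 0 := by
  rw [genPoissonKernel_eq_cosTail]
  exact (Measure.measurePreserving_sub_left volume x).quasiMeasurePreserving.ae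
    ((isHausdorffMoment_stretchedExp hα hr0 hr1).ae_cosTail_one_ne_zero
      (summable_stretchedExp hα hr0) (stretchedExp_pos _ _ _).ne' _)

theorem integrableOn_of_intervalIntegrable_genPoissonKernel_mul (hα : 0 < α) (hr0 : 0 < r)
    (hr1 : r < 1) {φ : ℝ → ℝ} (hφ : Function.Periodic φ (2 * π))
    (hnorm : eLpNorm φ 1 (volume.restrict (Ioc 0 (2 * π))) ≤ 1) {x : ℝ}
    (hint : IntervalIntegrable (fun t => genPoissonKernel α r β (x - t) * φ t) volume (-π) π) :
    IntegrableOn φ (Ioc 0 (2 * π)) := by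
  have hperiodic : Function.Periodic (fun t => genPoissonKernel α r β (x - t) * φ t) (2 * π) :=
    fun t => by
      beta_reduce
      rw [hφ t, ← sub_sub, (periodic_genPoissonKernel α r β).sub_eq]
  have hmeas : AEStronglyMeasurable φ (volume.restrict (Ioc 0 (2 * π))) :=
    aestronglyMeasurable_of_ae_ne_zero_of_mul
      ((continuous_genPoissonKernel hα hr0 β).comp (continuous_sub_left x)).aestronglyMeasurable
      (ae_restrict_of_ae (ae_genPoissonKernel_sub_ne_zero hα hr0 hr1 β x))
      ((intervalIntegrable_neg_pi_pi_iff hperiodic).1 hint).aestronglyMeasurable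
  exact memLp_one_iff_integrable.1 ⟨hmeas, hnorm.trans_lt ENNReal.one_lt_top⟩

theorem integral_abs_le_one_of_eLpNorm_le_one {φ : ℝ → ℝ} (hφ : Function.Periodic φ (2 * π))
    (hint : IntegrableOn φ (Ioc 0 (2 * π)))
    (hnorm : eLpNorm φ 1 (volume.restrict (Ioc 0 (2 * π))) ≤ 1) :
    ∫ t in (-π)..π, |φ t| ≤ 1 := by
  rw [integral_neg_pi_pi_eq (f := fun t => |φ t|) (hφ.comp abs),
    intervalIntegral.integral_of_le two_pi_pos.le]
  change ∫ t in Ioc 0 (2 * π), ‖φ t‖ ≤ 1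
  rw [integral_norm_eq_lintegral_enorm hint.aestronglyMeasurable, ← eLpNorm_one_eq_lintegral_enorm]
  exact ENNReal.toReal_le_of_le_ofReal zero_le_one (by rwa [ENNReal.ofReal_one])

-- `poissonClass` does not ask `φ` to be measurable. If `φ` is not integrable, then neither is
-- `P(x - ·) φ`, as `P` vanishes only on a null set; so the Bochner integrals representing `f` are
-- all `0` by convention and the density `0` represents `f` as well.
theorem exists_integrable_density (hα : 0 < α) (hr0 : 0 < r) (hr1 : r < 1) {f : ℝ → ℝ}
    (hf : f ∈ poissonClass α r β 1) :
    ∃ c : ℝ, ∃ ψ : ℝ → ℝ, IntervalIntegrable ψ volume (-π) π ∧ ∫ t in (-π)..π, |ψ t| ≤ 1 ∧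
      f = fun x => c + 1 / π * ∫ t in (-π)..π, genPoissonKernel α r β (x - t) * ψ t := by
  obtain ⟨-, a₀, φ, hφ, hnorm, -, hrep⟩ := hf
  by_cases hint : IntegrableOn φ (Ioc 0 (2 * π))
  · exact ⟨a₀ / 2, φ, (intervalIntegrable_neg_pi_pi_iff hφ).2 hint,
      integral_abs_le_one_of_eLpNorm_le_one hφ hint hnorm, funext hrep⟩
  · have hzero (x : ℝ) : ∫ t in (-π)..π, genPoissonKernel α r β (x - t) * φ t = 0 :=
      intervalIntegral.integral_undef fun h => hint
        (integrableOn_of_intervalIntegrable_genPoissonKernel_mul hα hr0 hr1 hφ hnorm h)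
    refine ⟨a₀ / 2, 0, intervalIntegrable_const, by simp, funext fun x => ?_⟩
    rw [hrep x, hzero x]
    simp

theorem sub_fourierSum_eq_integral_cosTail (hα : 0 < α) (hr : 0 < r) {ψ : ℝ → ℝ}
    (hψ : IntervalIntegrable ψ volume (-π) π) {n : ℕ} (hn : 0 < n) (c x : ℝ) :
    (c + 1 / π * ∫ t in (-π)..π, genPoissonKernel α r β (x - t) * ψ t) -
        fourierSum (n - 1)
          (fun y => c + 1 / π * ∫ t in (-π)..π, genPoissonKernel α r β (y - t) * ψ t) x =
      1 / π *
        ∫ t in (-π)..π, cosTail (fun k => stretchedExp α r k) (β * π / 2) n (x - t) * ψ t := by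
  rw [sub_fourierSum_const_add_convolution (n - 1) (continuous_genPoissonKernel hα hr β)
    (periodic_genPoissonKernel α r β) hψ, genPoissonKernel_eq_cosTail]
  simp only [cosTail_one_sub_fourierSum (summable_stretchedExp hα hr), Nat.sub_add_cancel hn]

theorem abs_sub_fourierSum_le (hα : 0 < α) (hr0 : 0 < r) (hr1 : r < 1) {n : ℕ} (hn : 0 < n)
    {f : ℝ → ℝ} (hf : f ∈ poissonClass α r β 1) (x : ℝ) :
    |f x - fourierSum (n - 1) f x| ≤ 1 / π * ∑' j : ℕ, stretchedExp α r ((n : ℝ) + j) := by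
  obtain ⟨c, ψ, hψ, hψ1, rfl⟩ := exists_integrable_density hα hr0 hr1 hf
  set S := ∑' j : ℕ, stretchedExp α r ((n : ℝ) + j)
  have hS : 0 ≤ S := tsum_nonneg fun j => (stretchedExp_pos _ _ _).le
  have htail (t : ℝ) : |cosTail (fun k => stretchedExp α r k) (β * π / 2) n t| ≤ S := by
    simpa only [abs_of_pos (stretchedExp_pos _ _ _), Nat.cast_add] using
      abs_cosTail_le (summable_stretchedExp hα hr0) (β * π / 2) n t
  rw [sub_fourierSum_eq_integral_cosTail hα hr0 hψ hn, abs_mul, abs_of_pos (by positivity)]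
  gcongr
  calc |∫ t in (-π)..π, cosTail (fun k => stretchedExp α r k) (β * π / 2) n (x - t) * ψ t|
      ≤ ∫ t in (-π)..π, S * |ψ t| := by
        rw [← norm_eq_abs]
        refine intervalIntegral.norm_integral_le_of_norm_le (by linarith [pi_pos])
          (.of_forall fun t _ => ?_) (hψ.abs.const_mul S)
        rw [norm_mul]
        exact mul_le_mul_of_nonneg_right (htail _) (norm_nonneg _)
    _ = S * ∫ t in (-π)..π, |ψ t| := intervalIntegral.integral_const_mul _ _
    _ ≤ S := mul_le_of_le_one_right hS hψ1

end PoissonClass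

section EnC

variable {α r β B : ℝ} {p : ℝ≥0∞} {n : ℕ}

theorem EnC_le_of_forall_le (hB : 0 ≤ B)
    (h : ∀ f ∈ poissonClass α r β p, ∀ x, |f x - fourierSum (n - 1) f x| ≤ B) :
    EnC α r β p n ≤ B :=
  Real.iSup_le (fun f => Real.iSup_le (fun hf => Real.iSup_le (h f hf) hB) hB) hB

theorem abs_sub_fourierSum_le_EnC
    (h : ∀ f ∈ poissonClass α r β p, ∀ x, |f x - fourierSum (n - 1) f x| ≤ B)
    {f : ℝ → ℝ} (hf : f ∈ poissonClass α r β p) (x : ℝ) :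
    |f x - fourierSum (n - 1) f x| ≤ EnC α r β p n := by
  have hB : 0 ≤ B := (abs_nonneg _).trans (h f hf 0)
  have hpoint : BddAbove (range fun x => |f x - fourierSum (n - 1) f x|) :=
    ⟨B, forall_mem_range.2 (h f hf)⟩
  have hclass : BddAbove (range fun g =>
      ⨆ (_ : g ∈ poissonClass α r β p), ⨆ x : ℝ, |g x - fourierSum (n - 1) g x|) :=
    ⟨B, forall_mem_range.2 fun g => Real.iSup_le (fun hg => Real.iSup_le (h g hg) hB) hB⟩
  calc |f x - fourierSum (n - 1) f x|
      ≤ ⨆ (_ : f ∈ poissonClass α r β p), ⨆ x : ℝ, |f x - fourierSum (n - 1) f x| := by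
        rw [ciSup_pos hf]
        exact le_ciSup hpoint x
    _ ≤ EnC α r β p n := le_ciSup hclass f

end EnC

/-! ### Lower bound for the deviation -/

section HalfPulse

/-- For `0 < δ ≤ 2π`, the `2π`-periodic function equal to `1 / (2 δ)` on `(0, δ]` and to `0` on
`(δ, 2π]`. It has mass `1 / 2` per period and tends to half a Dirac comb as `δ → 0`. -/
noncomputable def halfPulse (δ t : ℝ) : ℝ :=
  (Ioc 0 δ).indicator (fun _ => 1 / (2 * δ)) (toIocMod two_pi_pos 0 t)

variable {δ : ℝ}

theorem periodic_halfPulse (δ : ℝ) : Function.Periodic (halfPulse δ) (2 * π) := fun t => by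
  rw [halfPulse, toIocMod_add_right, ← halfPulse]

theorem halfPulse_nonneg (hδ : 0 ≤ δ) (t : ℝ) : 0 ≤ halfPulse δ t :=
  indicator_nonneg (fun _ _ => by positivity) _

theorem eqOn_halfPulse_indicator (δ : ℝ) :
    EqOn (halfPulse δ) ((Ioc 0 δ).indicator fun _ => 1 / (2 * δ)) (Ioc 0 (2 * π)) := fun t ht => by
  rw [halfPulse, (toIocMod_eq_self two_pi_pos).2 (by rwa [zero_add])]

theorem integrableOn_halfPulse (δ : ℝ) : IntegrableOn (halfPulse δ) (Ioc 0 (2 * π)) :=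
  (((integrableOn_const measure_Ioc_lt_top.ne).indicator measurableSet_Ioc).congr_fun
    (eqOn_halfPulse_indicator δ).symm measurableSet_Ioc)

theorem intervalIntegrable_halfPulse_sub (δ s a b : ℝ) :
    IntervalIntegrable (fun t => halfPulse δ (t - s)) volume a b := by
  have h := (intervalIntegrable_iff_integrableOn_Ioc_of_le two_pi_pos.le).2
    (integrableOn_halfPulse δ)
  simpa only [sub_add_cancel] using ((periodic_halfPulse δ).intervalIntegrable two_pi_pos.ne'
    (t := 0) (by rwa [zero_add]) (a - s) (b - s)).comp_sub_right s

theorem integral_mul_halfPulse_sub (hδ : δ ∈ Ioc 0 (2 * π)) {h : ℝ → ℝ}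
    (hh : Function.Periodic h (2 * π)) (s : ℝ) :
    ∫ t in (-π)..π, h t * halfPulse δ (t - s) = 1 / (2 * δ) * ∫ t in (0 : ℝ)..δ, h (t + s) := by
  have hperiodic : Function.Periodic (fun t => h (t + s) * halfPulse δ t) (2 * π) := fun t => by
    beta_reduce
    rw [periodic_halfPulse δ t, add_right_comm, hh]
  have hindicator : EqOn (fun t => h (t + s) * halfPulse δ t)
      ((Ioc 0 δ).indicator fun t => 1 / (2 * δ) * h (t + s)) (Ioc 0 (2 * π)) := fun t ht => by
    beta_reduce
    rw [eqOn_halfPulse_indicator δ ht, mul_comm, indicator_mul_left _ _ fun t => h (t + s)]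
  calc ∫ t in (-π)..π, h t * halfPulse δ (t - s)
      = ∫ t in (-π - s)..(-π - s + 2 * π), h (t + s) * halfPulse δ t := by
        rw [show -π - s + 2 * π = π - s by ring,
          ← intervalIntegral.integral_comp_sub_right (fun t => h (t + s) * halfPulse δ t)]
        simp only [sub_add_cancel]
    _ = ∫ t in (0 : ℝ)..(2 * π), h (t + s) * halfPulse δ t := by
        rw [hperiodic.intervalIntegral_add_eq (-π - s) 0, zero_add]
    _ = ∫ t in Ioc 0 δ, 1 / (2 * δ) * h (t + s) := by
        rw [intervalIntegral.integral_of_le two_pi_pos.le,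
          setIntegral_congr_fun measurableSet_Ioc hindicator,
          setIntegral_indicator measurableSet_Ioc, inter_eq_right.2 (Ioc_subset_Ioc_right hδ.2)]
    _ = 1 / (2 * δ) * ∫ t in (0 : ℝ)..δ, h (t + s) := by
        rw [← intervalIntegral.integral_of_le hδ.1.le, intervalIntegral.integral_const_mul]

theorem integral_halfPulse_sub (hδ : δ ∈ Ioc 0 (2 * π)) (s : ℝ) :
    ∫ t in (0 : ℝ)..(2 * π), halfPulse δ (t - s) = 1 / 2 := by
  have hδ0 : δ ≠ 0 := hδ.1.ne'
  rw [← integral_neg_pi_pi_eq fun t => by rw [add_sub_right_comm, periodic_halfPulse δ]]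
  have h := integral_mul_halfPulse_sub hδ (h := fun _ => 1) (fun _ => rfl) s
  simp only [one_mul] at h
  rw [h, intervalIntegral.integral_const]
  field_simp
  simp

theorem eLpNorm_halfPulse_sub (hδ : δ ∈ Ioc 0 (2 * π)) (s : ℝ) :
    eLpNorm (fun t => halfPulse δ (t - s)) 1 (volume.restrict (Ioc 0 (2 * π))) =
      ENNReal.ofReal (1 / 2) := by
  have hint := (intervalIntegrable_iff_integrableOn_Ioc_of_le two_pi_pos.le).1
    (intervalIntegrable_halfPulse_sub δ s 0 (2 * π))
  rw [eLpNorm_one_eq_lintegral_enorm, ← ofReal_integral_norm_eq_lintegral_enorm hint,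
    ← integral_halfPulse_sub hδ s, intervalIntegral.integral_of_le two_pi_pos.le]
  simp only [norm_of_nonneg (halfPulse_nonneg hδ.1.le _)]

theorem tendsto_integral_mul_halfPulse_sub {h : ℝ → ℝ} (hh : Function.Periodic h (2 * π))
    (hcont : Continuous h) (s : ℝ) :
    Tendsto (fun δ => ∫ t in (-π)..π, h t * halfPulse δ (t - s)) (𝓝[>] 0) (𝓝 (h s / 2)) := by
  have hderiv : HasDerivAt (fun δ => ∫ t in (0 : ℝ)..δ, h (t + s)) (h s) 0 := by
    simpa only [zero_add] using (Continuous.integral_hasStrictDerivAt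
      (f := fun t => h (t + s)) (by fun_prop) 0 0).hasDerivAt
  have hslope := ((hasDerivAt_iff_tendsto_slope_zero.1 hderiv).mono_left
    (nhdsWithin_mono 0 fun δ (hδ : 0 < δ) => hδ.ne')).div_const 2
  refine hslope.congr' ?_
  filter_upwards [Ioc_mem_nhdsGT two_pi_pos] with δ hδ
  rw [integral_mul_halfPulse_sub hδ hh, zero_add, intervalIntegral.integral_same, sub_zero,
    smul_eq_mul]
  ring

end HalfPulse

theorem poissonIntegral_halfPulse_sub_mem_poissonClass {δ : ℝ} (hδ : δ ∈ Ioc 0 (2 * π))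
    (α r β s₁ s₂ : ℝ) :
    (fun x => 0 + 1 / π * ∫ t in (-π)..π, genPoissonKernel α r β (x - t) *
      (halfPulse δ (t - s₁) - halfPulse δ (t - s₂))) ∈ poissonClass α r β 1 := by
  have hmeas (s : ℝ) : AEStronglyMeasurable (fun t => halfPulse δ (t - s))
      (volume.restrict (Ioc 0 (2 * π))) :=
    ((intervalIntegrable_iff_integrableOn_Ioc_of_le two_pi_pos.le).1
      (intervalIntegrable_halfPulse_sub δ s 0 (2 * π))).aestronglyMeasurable
  refine ⟨fun x => ?_, 0, fun t => halfPulse δ (t - s₁) - halfPulse δ (t - s₂), fun t => ?_, ?_,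
    ?_, fun x => by rw [zero_div]⟩
  · simp only [add_sub_right_comm x, periodic_genPoissonKernel α r β _]
  · simp only [add_sub_right_comm t, periodic_halfPulse δ _]
  · refine (eLpNorm_sub_le (hmeas s₁) (hmeas s₂) le_rfl).trans ?_
    rw [eLpNorm_halfPulse_sub hδ, eLpNorm_halfPulse_sub hδ,
      ← ENNReal.ofReal_add (by norm_num) (by norm_num), add_halves, ENNReal.ofReal_one]
  · rw [intervalIntegral.integral_sub (intervalIntegrable_halfPulse_sub δ s₁ _ _)
      (intervalIntegrable_halfPulse_sub δ s₂ _ _), integral_halfPulse_sub hδ,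
      integral_halfPulse_sub hδ, sub_self]

section LowerBound

variable {α r β : ℝ} {n : ℕ}

theorem cosTail_sub_cosTail_le_EnC (hα : 0 < α) (hr0 : 0 < r) (hr1 : r < 1) (hn : 0 < n)
    (u v : ℝ) :
    1 / π * (cosTail (fun k => stretchedExp α r k) (β * π / 2) n u / 2 -
      cosTail (fun k => stretchedExp α r k) (β * π / 2) n v / 2) ≤ EnC α r β 1 n := by
  set T := cosTail (fun k => stretchedExp α r k) (β * π / 2) n
  have hT : Continuous T := continuous_cosTail (summable_stretchedExp hα hr0) _ n
  have hTneg : Function.Periodic (fun t => T (0 - t)) (2 * π) := fun t => by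
    beta_reduce
    rw [← sub_sub]
    exact (periodic_cosTail _ _ n).sub_eq _
  have hlim (w : ℝ) : Tendsto (fun δ => ∫ t in (-π)..π, T (0 - t) * halfPulse δ (t - -w))
      (𝓝[>] 0) (𝓝 (T w / 2)) := by
    simpa only [zero_sub, neg_neg] using
      tendsto_integral_mul_halfPulse_sub hTneg (by fun_prop) (-w)
  refine le_of_tendsto (((hlim u).sub (hlim v)).const_mul (1 / π)) ?_
  filter_upwards [Ioc_mem_nhdsGT two_pi_pos] with δ hδ
  have hpulse (w : ℝ) := intervalIntegrable_halfPulse_sub δ (-w) (-π) π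
  have hmul (w : ℝ) := (hpulse w).continuousOn_mul (g := fun t => T (0 - t))
    (Continuous.continuousOn (by fun_prop))
  have hdev := sub_fourierSum_eq_integral_cosTail (β := β) hα hr0 ((hpulse u).sub (hpulse v)) hn 0 0
  rw [← intervalIntegral.integral_sub (hmul u) (hmul v)]
  simp only [← mul_sub]
  refine (le_abs_self _).trans ?_
  rw [← hdev]
  exact abs_sub_fourierSum_le_EnC (fun f hf x => abs_sub_fourierSum_le hα hr0 hr1 hn hf x)
    (poissonIntegral_halfPulse_sub_mem_poissonClass hδ α r β (-u) (-v)) 0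

theorem one_sub_abs_le_cos (y : ℝ) : 1 - |y| ≤ cos y := by
  rcases le_total |y| 2 with h | h
  · have hcos := one_sub_sq_div_two_le_cos (x := y)
    rw [← sq_abs] at hcos
    nlinarith [abs_nonneg y]
  · linarith [neg_one_le_cos y]

theorem cosTail_add_pi (a : ℕ → ℝ) (θ : ℝ) (n : ℕ) (t : ℝ) :
    cosTail a (θ + π) n t = -cosTail a θ n t := by
  simp only [cosTail, ← sub_sub, cos_sub_pi, mul_neg, tsum_neg]

-- The point is the `u` of least modulus with `n u ≡ θ` modulo `2π`, so that the first term of the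
-- tail is `a n` and the phase of the `j`-th one is `j u`, with `|u| ≤ π / n`.
theorem exists_sub_le_cosTail {a : ℕ → ℝ} (ha0 : ∀ k, 0 ≤ a k) (ha : Summable a) (hn : 0 < n)
    (hM : Summable fun j : ℕ => j * a (n + j)) (θ : ℝ) :
    ∃ u, ∑' j, a (n + j) - π / n * ∑' j : ℕ, j * a (n + j) ≤ cosTail a θ n u := by
  have hn' : (0 : ℝ) < n := Nat.cast_pos.2 hn
  obtain ⟨m, hm, -⟩ := existsUnique_sub_zsmul_mem_Ioc two_pi_pos θ (-π)
  rw [zsmul_eq_mul] at hm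
  set u := (θ - m * (2 * π)) / n with hu
  have hnu : n * u = θ - m * (2 * π) := mul_div_cancel₀ _ hn'.ne'
  have hu_le : |u| ≤ π / n := by
    rw [hu, abs_div, abs_of_pos hn']
    gcongr
    exact abs_le.2 ⟨hm.1.le, by linarith [hm.2]⟩
  have hcos (j : ℕ) : cos ((n + j : ℕ) * u - θ) = cos (j * u) := by
    rw [← cos_sub_int_mul_two_pi (j * u) m]
    congr 1
    push_cast
    linear_combination hnu
  have hS : Summable fun j => a (n + j) := by
    simpa only [abs_of_nonneg (ha0 _)] using summable_abs_add ha n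
  refine ⟨u, ?_⟩
  rw [← tsum_mul_left, ← hS.tsum_sub (hM.mul_left _)]
  refine (hS.sub (hM.mul_left _)).tsum_le_tsum (fun j => ?_) (summable_cosTail ha θ n u)
  calc a (n + j) - π / n * (j * a (n + j)) = a (n + j) * (1 - j * (π / n)) := by ring
    _ ≤ a (n + j) * (1 - |j * u|) := by
      rw [abs_mul, Nat.abs_cast]
      gcongr
      exact ha0 _
    _ ≤ a (n + j) * cos ((n + j : ℕ) * u - θ) := by
      rw [hcos]
      exact mul_le_mul_of_nonneg_left (one_sub_abs_le_cos _) (ha0 _)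

theorem tsum_sub_le_EnC (hα : 0 < α) (hr0 : 0 < r) (hr1 : r < 1) (hn : 0 < n) :
    1 / π * (∑' j : ℕ, stretchedExp α r ((n : ℝ) + j) -
      π / n * ∑' j : ℕ, j * stretchedExp α r ((n : ℝ) + j)) ≤ EnC α r β 1 n := by
  have hM : Summable fun j : ℕ => j * stretchedExp α r (n + j : ℕ) := by
    simpa only [Nat.cast_add] using summable_mul_stretchedExp_add hα hr0 n
  have hexists := exists_sub_le_cosTail (a := fun k : ℕ => stretchedExp α r k)
    (fun k => (stretchedExp_pos _ _ _).le) (summable_stretchedExp hα hr0) hn hM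
  simp only [Nat.cast_add] at hexists
  obtain ⟨u, hu⟩ := hexists (β * π / 2)
  obtain ⟨v, hv⟩ := hexists (β * π / 2 + π)
  rw [cosTail_add_pi] at hv
  exact (mul_le_mul_of_nonneg_left (by linarith) (by positivity)).trans
    (cosTail_sub_cosTail_le_EnC hα hr0 hr1 hn u v)

end LowerBound

/-! ### Asymptotic equality -/

theorem exists_pos_and_rpow_add_rpow_le {α r ε : ℝ} (hr0 : 0 < r) (hr1 : r < 1) (hε : 0 < ε) :
    ∃ n : ℕ, 0 < n ∧
      1 / (α * r) * (n : ℝ) ^ (-r) + α * r * (n : ℝ) ^ (-(1 - r)) ≤ ε := by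
  have hpow {s : ℝ} (hs : 0 < s) (c : ℝ) :
      Tendsto (fun n : ℕ => c * (n : ℝ) ^ (-s)) atTop (𝓝 0) := by
    simpa only [mul_zero, Function.comp_apply] using
      ((tendsto_rpow_neg_atTop hs).comp tendsto_natCast_atTop_atTop).const_mul c
  have hlim := (hpow hr0 (1 / (α * r))).add (hpow (sub_pos.2 hr1) (α * r))
  rw [add_zero] at hlim
  exact ((eventually_gt_atTop 0).and (hlim.eventually_le_const hε)).exists

section Asymptotics

variable {α r β : ℝ} {n : ℕ}

theorem pos_and_decayScale_le_of_n₀one_le (hα : 0 < α) (hr0 : 0 < r) (hr1 : r < 1)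
    (hn : n₀one α r ≤ n) :
    0 < n ∧ decayScale α r n / n + 1 / decayScale α r n ≤ 1 / 14 := by
  obtain ⟨hpos, hle⟩ :
      0 < n₀one α r ∧ 1 / (α * r) * (n₀one α r : ℝ) ^ (-r) +
        α * r * (n₀one α r : ℝ) ^ (-(1 - r)) ≤ 1 / 14 :=
    Nat.sInf_mem (exists_pos_and_rpow_add_rpow_le hr0 hr1 (by norm_num))
  have hn0 : 0 < n := hpos.trans_le hn
  have hmono {s : ℝ} (hs : 0 < s) : (n : ℝ) ^ (-s) ≤ (n₀one α r : ℝ) ^ (-s) :=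
    rpow_le_rpow_of_nonpos (Nat.cast_pos.2 hpos) (Nat.cast_le.2 hn) (neg_nonpos.2 hs.le)
  refine ⟨hn0, le_trans ?_ hle⟩
  rw [decayScale_div_self (Nat.cast_pos.2 hn0), one_div_decayScale n.cast_nonneg]
  gcongr 1 / (α * r) * ?_ + α * r * ?_
  exacts [hmono hr0, hmono (sub_pos.2 hr1)]

theorem EnC_le (hα : 0 < α) (hr0 : 0 < r) (hr1 : r < 1) (hn : 0 < n)
    (hscale : decayScale α r n / n ≤ 1 / 2) :
    EnC α r β 1 n ≤ 1 / π * (stretchedExp α r n * decayScale α r n *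
      (1 + 2 * (decayScale α r n / n) + 1 / decayScale α r n)) := by
  have hS : 0 ≤ ∑' j : ℕ, stretchedExp α r ((n : ℝ) + j) :=
    tsum_nonneg fun j => (stretchedExp_pos _ _ _).le
  refine (EnC_le_of_forall_le (by positivity) fun f hf x =>
    abs_sub_fourierSum_le hα hr0 hr1 hn hf x).trans ?_
  gcongr
  exact tsum_stretchedExp_le hα hr0 hn hscale

theorem le_EnC (hα : 0 < α) (hr0 : 0 < r) (hr1 : r < 1) (hn : 0 < n)
    (hscale : decayScale α r n / n ≤ 1 / 4) :
    1 / π * (stretchedExp α r n * decayScale α r n -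
      π / n * (2 * (stretchedExp α r n * decayScale α r n) * (1 + 2 * decayScale α r n))) ≤
      EnC α r β 1 n := by
  refine le_trans ?_ (tsum_sub_le_EnC hα hr0 hr1 hn)
  gcongr
  exacts [stretchedExp_mul_decayScale_le_tsum hα hr0 hr1.le hn,
    tsum_mul_stretchedExp_le hα hr0 hn hscale]

theorem abs_EnC_sub_le (hα : 0 < α) (hr0 : 0 < r) (hr1 : r < 1) (hn : 0 < n)
    (hscale : decayScale α r n / n + 1 / decayScale α r n ≤ 1 / 14) :
    |EnC α r β 1 n - stretchedExp α r n * decayScale α r n / π| ≤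
      5 * (stretchedExp α r n * decayScale α r n *
        (decayScale α r n / n + 1 / decayScale α r n)) := by
  have hn' : (0 : ℝ) < n := Nat.cast_pos.2 hn
  have hq := decayScale_pos hα hr0 hn'
  have hX : 0 < decayScale α r n / n := by positivity
  have hY : 0 < 1 / decayScale α r n := by positivity
  have hupper := EnC_le (β := β) hα hr0 hr1 hn (by linarith)
  have hlower := le_EnC (β := β) hα hr0 hr1 hn (by linarith)
  have hF := mul_pos (stretchedExp_pos α r n) hq
  set F := stretchedExp α r n * decayScale α r n
  set q := decayScale α r n
  rw [abs_le]
  constructor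
  · have hcorrection : 1 / π * (F - π / n * (2 * F * (1 + 2 * q))) =
        F / π - F * (q / n) * (2 * (1 / q) + 4) := by
      field_simp
      ring
    nlinarith [mul_pos hF hX, mul_pos hF hY]
  · have hcorrection : 1 / π * (F * (1 + 2 * (q / n) + 1 / q)) ≤
        F / π + F * (2 * (q / n) + 1 / q) := by
      have hpi : 1 / π ≤ 1 := (div_le_one pi_pos).2 (by linarith [pi_gt_three])
      have := mul_le_of_le_one_left (a := 1 / π) (by positivity : 0 ≤ F * (2 * (q / n) + 1 / q)) hpi
      linear_combination this
    nlinarith [mul_pos hF hX, mul_pos hF hY]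

theorem exp_mul_rpow_mul_eq (hα : 0 < α) (hr : 0 < r) {x : ℝ} (hx : 0 < x) (γ : ℝ) :
    exp (-α * x ^ r) * x ^ (1 - r) *
        (1 / (π * α * r) + γ * ((α * r) ^ (-(2 : ℝ)) * x ^ (-r) + x ^ (-(1 - r)))) =
      stretchedExp α r x * decayScale α r x / π +
        γ * (stretchedExp α r x * decayScale α r x *
          (decayScale α r x / x + 1 / decayScale α r x)) := by
  rw [decayScale_div_self hx, one_div_decayScale hx.le, stretchedExp, decayScale,
    rpow_neg (by positivity : 0 ≤ α * r), rpow_two]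
  field_simp

end Asymptotics

theorem statement2 (α r β : ℝ)
    (hr0 : 0 < r) (hr1 : r < 1) (hα : 0 < α) :
    ∀ n : ℕ, n₀one α r ≤ n →
      ∃ γ : ℝ, |γ| ≤ (14 * π) ^ 2 ∧
        EnC α r β 1 n =
          Real.exp (-α * (n : ℝ) ^ r) * (n : ℝ) ^ (1 - r) *
            (1 / (π * α * r) +
              γ * ((α * r) ^ (-(2 : ℝ)) * (n : ℝ) ^ (-r) + (n : ℝ) ^ (-(1 - r)))) := by
  intro n hn
  obtain ⟨hn0, hscale⟩ := pos_and_decayScale_le_of_n₀one_le hα hr0 hr1 hn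
  have hn' : (0 : ℝ) < n := Nat.cast_pos.2 hn0
  have hq := decayScale_pos hα hr0 hn'
  have hE := stretchedExp_pos α r n
  have hbound := abs_EnC_sub_le (β := β) hα hr0 hr1 hn0 hscale
  set main := stretchedExp α r n * decayScale α r n / π
  set error := stretchedExp α r n * decayScale α r n *
    (decayScale α r n / n + 1 / decayScale α r n)
  have herror : 0 < error := by positivity
  refine ⟨(EnC α r β 1 n - main) / error, ?_, ?_⟩
  · calc |(EnC α r β 1 n - main) / error| ≤ 5 := by
          rwa [abs_div, abs_of_pos herror, div_le_iff₀ herror]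
      _ ≤ (14 * π) ^ 2 := by nlinarith [pi_gt_three]
  · rw [exp_mul_rpow_mul_eq hα hr0 hn', div_mul_cancel₀ _ herror.ne', add_sub_cancel]
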